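/- arXiv:math/0501524 — 2 statements merged into one kernel-verified Lean document; each statement's English description precedes it below -/
import Mathlib

section
/- If ℬ is a family of topological spaces such that every uncountable regular Hausdorff topological space of cardinality ℵ₁ has an uncountable subspace homeomorphic to a member of ℬ, then ℬ has cardinality at least ℵ₂. In particular, any basis (with respect to taking uncountable subspaces) for the class of uncountable regular Hausdorff spaces has cardinality strictly greater than ℵ₁. -/
/-!
Moore's argument. Walk from `β` down to `α < β` along a `C`-sequence on `ω₁`, and let `osc α β`
count the oscillations between the weight functions of `α` and `β` on the lower trace of the walk.
Given uncountably many pairwise disjoint finite sets on either side, one can choose a single set on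
the left and a sequence of sets on the right along which all the values of `osc` increase by
exactly one at every step. Rotating a circle by independent angles turns `osc` into a two-valued
colouring, and Kronecker's theorem on the torus shows that the colouring attains every pattern on
such sets, except that it cannot separate arguments below the diagonal, where it is constant.

For `A ⊆ ω₁` the colouring yields a subspace of the Cantor cube `2^A`. A homeomorphism between
uncountable pieces of the spaces of `A` and `B` would let finitely many coordinates in `A` control
a coordinate in `B \ A`; if `A ∩ B` is countable, there are uncountably many such coordinates and
the freedom of the colouring rules this out. An almost disjoint family of `ℵ₂` uncountable subsets
of `ω₁` thus yields `ℵ₂` spaces no two of which can share a member of a basis.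
-/

universe u

namespace Moore

open Set Filter Order Cardinal

/-- Linear orders all of whose proper initial segments are countable. Together with
well-foundedness and uncountability this characterises `ω₁`, and these three properties are all that
the combinatorial part of the proof uses. -/
class CountableIio (W : Type*) [Preorder W] : Prop where
  countable_Iio (w : W) : (Iio w).Countable

section CountableIio

variable {W : Type*} [LinearOrder W] [CountableIio W]

theorem exists_ge_of_not_countable {D : Set W} (hD : ¬ D.Countable) (γ : W) : ∃ x ∈ D, γ ≤ x := by
  by_contra! h
  exact hD ((CountableIio.countable_Iio γ).mono h)

theorem exists_mem_forall_ge {T κ : Type*} [Countable κ] {b : T → κ → W}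
    (hb : ∀ k, Function.Injective fun y ↦ b y k) {S : Set T} (hS : ¬ S.Countable) (γ : W) :
    ∃ y ∈ S, ∀ k, γ ≤ b y k := by
  by_contra! h
  refine hS ((countable_iUnion fun k ↦
    (CountableIio.countable_Iio γ).preimage (hb k)).mono fun y hy ↦ ?_)
  simpa using h y hy

end CountableIio

section OmegaOne

variable {W : Type*} [ConditionallyCompleteLinearOrderBot W] [CountableIio W] [Uncountable W]

theorem exists_forall_lt_of_countable {s : Set W} (hs : s.Countable) : ∃ γ, ∀ x ∈ s, x < γ := by
  by_contra! h
  have hcover : (univ : Set W) ⊆ ⋃ x ∈ s, insert x (Iio x) := fun γ _ ↦ by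
    obtain ⟨x, hx, hγ⟩ := h γ
    exact mem_biUnion hx (by simpa [le_iff_eq_or_lt] using hγ)
  exact not_countable_univ
    ((hs.biUnion fun x _ ↦ (CountableIio.countable_Iio x).insert x).mono hcover)

instance : NoMaxOrder W where
  exists_gt w := (exists_forall_lt_of_countable (countable_singleton w)).imp fun _ h ↦ h w rfl

theorem exists_forall_lt_of_finite {ι : Type*} [Finite ι] (f : ι → W) : ∃ γ, ∀ i, f i < γ := by
  simpa using exists_forall_lt_of_countable (countable_range f)

theorem exists_forall_exists_eq {Q I : Type*} [Countable Q] (c : I → Q) {R : W → I → Prop}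
    (hR : ∀ i, IsLowerSet {γ | R γ i}) (h : ∀ γ, ∃ i, R γ i) : ∃ q, ∀ γ, ∃ i, c i = q ∧ R γ i := by
  by_contra! hbad
  choose g hg using hbad
  obtain ⟨u, hu⟩ := exists_forall_lt_of_countable (countable_range g)
  obtain ⟨i, hi⟩ := h u
  exact hg (c i) i rfl (hR i (hu _ ⟨c i, rfl⟩).le hi)

theorem cof_ne_aleph0 : Order.cof W ≠ ℵ₀ := fun h ↦ by
  obtain ⟨s, hs, hcard⟩ := exists_cof_eq W
  obtain ⟨γ, hγ⟩ := exists_forall_lt_of_countable (le_aleph0_iff_set_countable.1 (hcard.trans h).le)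
  obtain ⟨x, hx, hle⟩ := hs γ
  exact (hγ x hx).not_ge hle

end OmegaOne

section Limits

variable {W : Type*} [ConditionallyCompleteLinearOrderBot W] {δ : W}

theorem exists_lt_forall_lt_of_finset (hδ : IsSuccLimit δ) {s : Finset W} (hs : ∀ x ∈ s, x < δ) :
    ∃ γ < δ, ∀ x ∈ s, x < γ := by
  obtain ⟨γ, hγ, hlt⟩ := hδ.lt_iff_exists_lt.1 ((Finset.sup_lt_iff hδ.bot_lt (f := id)).2 hs)
  exact ⟨γ, hγ, fun x hx ↦ (Finset.le_sup (f := id) hx).trans_lt hlt⟩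

theorem exists_lt_forall_lt_of_finite (hδ : IsSuccLimit δ) {ι : Type*} [Finite ι] {f : ι → W}
    (hf : ∀ i, f i < δ) : ∃ γ < δ, ∀ i, f i < γ := by
  simpa using exists_lt_forall_lt_of_finset hδ (s := (finite_range f).toFinset) (by simpa using hf)

end Limits

section Club

variable {W : Type*} [ConditionallyCompleteLinearOrderBot W]

/-- The limit points closed under the function `G`; every club of `ω₁` contains all the closure
points of some function. -/
def closurePoints (G : W → W) : Set W := {δ | IsSuccLimit δ ∧ ∀ γ < δ, G γ < δ}

theorem dirSupClosed_closurePoints (G : W → W) : DirSupClosed (closurePoints G) := by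
  intro d hd hne _ x hx
  by_cases hxd : x ∈ d
  · exact hd hxd
  have hlt : ∀ γ < x, ∃ δ ∈ d, γ < δ ∧ δ < x := fun γ hγ ↦ by
    obtain ⟨δ, hδ, hγδ, hle⟩ := hx.exists_between hγ
    exact ⟨δ, hδ, hγδ, hle.lt_of_ne fun h ↦ hxd (h ▸ hδ)⟩
  refine ⟨⟨?_, fun γ hγ ↦ ?_⟩, fun γ hγ ↦ ?_⟩
  · obtain ⟨δ, hδ⟩ := hne
    exact not_isMin_of_lt ((hx.1 hδ).lt_of_ne fun h ↦ hxd (h ▸ hδ))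
  · obtain ⟨δ, -, hγδ, hδx⟩ := hlt γ hγ.lt
    exact hγ.2 hγδ hδx
  · obtain ⟨δ, hδ, hγδ, hδx⟩ := hlt γ hγ
    exact ((hd hδ).2 γ hγδ).trans hδx

variable [CountableIio W] [Uncountable W]

theorem exists_closurePoint_gt (G : W → W) (γ₀ : W) : ∃ δ ∈ closurePoints G, γ₀ < δ := by
  have hbound : ∀ γ, ∃ γ', γ < γ' ∧ ∀ x ≤ γ, G x < γ' := fun γ ↦ by
    obtain ⟨γ', h⟩ := exists_forall_lt_of_countable (s := insert γ (G '' insert γ (Iio γ)))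
      ((((CountableIio.countable_Iio γ).insert γ).image G).insert γ)
    exact ⟨γ', h γ (mem_insert _ _), fun x hx ↦
      h _ (mem_insert_of_mem _ ⟨x, by simpa [le_iff_eq_or_lt] using hx, rfl⟩)⟩
  choose H hlt hG using hbound
  let d : ℕ → W := fun n ↦ H^[n] γ₀
  have hd : ∀ n, d (n + 1) = H (d n) := fun n ↦ Function.iterate_succ_apply' H n γ₀
  have hbdd : BddAbove (range d) := by
    obtain ⟨u, hu⟩ := exists_forall_lt_of_countable (countable_range d)
    exact ⟨u, fun x hx ↦ (hu x hx).le⟩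
  have hlt_sup : ∀ n, d n < ⨆ n, d n := fun n ↦
    ((hlt (d n)).trans_eq (hd n).symm).trans_le (le_ciSup hbdd (n + 1))
  refine ⟨⨆ n, d n, ⟨⟨not_isMin_of_lt (hlt_sup 0), fun γ hγ ↦ ?_⟩, fun γ hγ ↦ ?_⟩, hlt_sup 0⟩
  · obtain ⟨n, hn⟩ := exists_lt_of_lt_ciSup hγ.lt
    exact hγ.2 hn (hlt_sup n)
  · obtain ⟨n, hn⟩ := exists_lt_of_lt_ciSup hγ
    exact ((hG (d n) γ hn.le).trans_eq (hd n).symm).trans (hlt_sup (n + 1))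

theorem isClub_closurePoints (G : W → W) : IsClub (closurePoints G) :=
  ⟨dirSupClosed_closurePoints G, fun γ ↦
    (exists_closurePoint_gt G γ).imp fun _ h ↦ ⟨h.1, h.2.le⟩⟩

variable [WellFoundedLT W]

variable (W) in
/-- The filter generated by the club subsets of `W`. -/
def clubFilter : Filter W where
  sets := {S | ∃ T ⊆ S, IsClub T}
  univ_sets := ⟨univ, subset_rfl, .univ⟩
  sets_of_superset := fun ⟨T, hT, hclub⟩ h ↦ ⟨T, hT.trans h, hclub⟩
  inter_sets := fun ⟨T, hT, hclub⟩ ⟨T', hT', hclub'⟩ ↦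
    ⟨T ∩ T', inter_subset_inter hT hT', .inter cof_ne_aleph0 hclub hclub'⟩

theorem eventually_clubFilter {p : W → Prop} (G : W → W) (h : ∀ δ ∈ closurePoints G, p δ) :
    ∀ᶠ δ in clubFilter W, p δ :=
  ⟨closurePoints G, h, isClub_closurePoints G⟩

theorem eventually_isSuccLimit : ∀ᶠ δ in clubFilter W, IsSuccLimit δ :=
  eventually_clubFilter id fun _ h ↦ h.1

instance : (clubFilter W).NeBot where
  ne' h := by
    obtain ⟨T, hT, hclub⟩ : ∅ ∈ clubFilter W := h ▸ mem_bot
    exact hclub.nonempty.ne_empty (subset_empty_iff.1 hT)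

/-- The reflection principle that replaces countable elementary submodels: almost every `δ` already
contains a witness for every satisfiable statement with parameters below `δ`. -/
theorem eventually_reflects {T : Finset W → Type*} [∀ U, Countable (T U)]
    (Q : ∀ U, T U → W → Prop) : ∀ᶠ δ in clubFilter W, ∀ U : Finset W, (∀ x ∈ U, x < δ) →
      ∀ t : T U, (∃ v, Q U t v) → ∃ v < δ, Q U t v := by
  classical
  let f (p : Σ U, T U) : W := sInf {v | Q p.1 p.2 v}
  have hbound : ∀ w : W, ∃ u, ∀ p : Σ U, T U, ↑p.1 ⊆ Iio w → f p < u := fun w ↦ by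
    have hfin : {U : Finset W | ↑U ⊆ Iio w}.Countable := by
      refine ((countable_ofPred_finite_subset (CountableIio.countable_Iio w)).preimage
        Finset.coe_injective).mono fun U hU ↦ ?_
      exact ⟨U.finite_toSet, hU⟩
    have hsigma : {p : Σ U, T U | ↑p.1 ⊆ Iio w}.Countable :=
      (hfin.biUnion fun U _ ↦ countable_range (Sigma.mk U)).mono <| by
        rintro ⟨U, t⟩ hU
        exact mem_biUnion hU ⟨t, rfl⟩
    exact (exists_forall_lt_of_countable (hsigma.image f)).imp fun u hu p hp ↦
      hu _ (mem_image_of_mem f hp)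
  choose G hG using hbound
  refine eventually_clubFilter G fun δ hδ U hU t ht ↦ ?_
  obtain ⟨w, hw, hUw⟩ := exists_lt_forall_lt_of_finset hδ.1 hU
  exact ⟨f ⟨U, t⟩, (hG w ⟨U, t⟩ hUw).trans (hδ.2 w hw), csInf_mem ht⟩

end Club

section Walks

/-- A C-sequence: a choice of cofinal subsets `C β ⊆ Iio β` that are locally finite below `β`. -/
structure CSequence (W : Type*) [Preorder W] where
  toFun : W → Set W
  lt_of_mem {β c : W} : c ∈ toFun β → c < β
  finite_inter_Iio {α β : W} : α < β → (toFun β ∩ Iio α).Finite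
  exists_ge {α β : W} : α < β → ∃ c ∈ toFun β, α ≤ c

variable {W : Type*} [ConditionallyCompleteLinearOrderBot W]

instance : CoeFun (CSequence W) fun _ ↦ W → Set W := ⟨CSequence.toFun⟩

theorem exists_cofinal_locallyFinite {β : W} (hβ : (Iio β).Countable) : ∃ C ⊆ Iio β,
    (∀ α < β, (C ∩ Iio α).Finite) ∧ ∀ α < β, ∃ c ∈ C, α ≤ c := by
  rcases (Iio β).eq_empty_or_nonempty with hempty | hne
  · have hnot : ∀ α, ¬ α < β := fun α hα ↦ hempty.subset hα
    exact ⟨∅, empty_subset _, fun α hα ↦ (hnot α hα).elim, fun α hα ↦ (hnot α hα).elim⟩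
  obtain ⟨g, hg⟩ := hβ.exists_eq_range hne
  have hlt : ∀ n, g n < β := fun n ↦ hg.superset (mem_range_self n)
  have hmono := (partialSups g).monotone
  refine ⟨range (partialSups g), ?_, fun α hα ↦ ?_, fun α hα ↦ ?_⟩
  · rintro _ ⟨n, rfl⟩
    simpa [partialSups_apply, Finset.sup'_lt_iff] using fun m _ ↦ hlt m
  · obtain ⟨m, rfl⟩ : α ∈ range g := hg ▸ hα
    refine ((finite_lt_nat m).image (partialSups g)).subset ?_
    rintro _ ⟨⟨n, rfl⟩, hn⟩
    exact ⟨n, lt_of_not_ge fun h ↦ ((le_partialSups g m).trans (hmono h)).not_gt hn, rfl⟩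
  · obtain ⟨m, rfl⟩ : α ∈ range g := hg ▸ hα
    exact ⟨_, mem_range_self m, le_partialSups g m⟩

instance [CountableIio W] : Nonempty (CSequence W) := by
  choose C hlt hfin hcof using fun β : W ↦
    exists_cofinal_locallyFinite (CountableIio.countable_Iio β)
  exact ⟨⟨C, fun hc ↦ hlt _ hc, fun h ↦ hfin _ _ h, fun h ↦ hcof _ _ h⟩⟩

namespace CSequence

variable (C : CSequence W) {α β γ δ x : W}

/-- The first step of the walk from `β` down to `α < β`. -/
noncomputable def step (α β : W) : W := sInf {c ∈ C β | α ≤ c}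

/-- The largest element of `C β` below `α`, and `⊥` if there is none. -/
noncomputable def low (α β : W) : W := sSup (C β ∩ Iio α)

theorem le_low (h : α < β) (hx : x ∈ C β) (hxα : x < α) : x ≤ C.low α β :=
  le_csSup (C.finite_inter_Iio h).bddAbove ⟨hx, hxα⟩

theorem low_lt (hα : ⊥ < α) (h : α < β) : C.low α β < α := by
  rcases (C β ∩ Iio α).eq_empty_or_nonempty with hempty | hne
  · rwa [low, hempty, csSup_empty]
  · exact (hne.csSup_mem (C.finite_inter_Iio h)).2

variable {C} in
theorem low_eq_low (hαβ : α ≤ β) (h : ∀ c ∈ C γ, c < β → c < α) : C.low α γ = C.low β γ :=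
  congrArg sSup <| inter_congr_left
    (fun c hc ↦ h c hc.1 hc.2) fun _ hc ↦ hc.2.trans_le hαβ

variable {C} in
theorem step_eq_step (hαβ : α ≤ β) (h : ∀ c ∈ C γ, c < β → c < α) : C.step α γ = C.step β γ := by
  refine congrArg sInf (Set.ext fun c ↦ and_congr_right fun hc ↦ ⟨fun hαc ↦ ?_, hαβ.trans⟩)
  exact le_of_not_gt fun hcβ ↦ (h c hc hcβ).not_ge hαc

variable {C} in
theorem infinite_of_isSuccLimit (hδ : IsSuccLimit δ) : (C δ).Infinite := fun hfin ↦ by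
  obtain ⟨γ, hγ, hlt⟩ := exists_lt_forall_lt_of_finset hδ (s := hfin.toFinset)
    fun c hc ↦ C.lt_of_mem (hfin.mem_toFinset.1 hc)
  obtain ⟨c, hc, hγc⟩ := C.exists_ge hγ
  exact (hlt c (hfin.mem_toFinset.2 hc)).not_ge hγc

theorem step_mem [WellFoundedLT W] (h : α < β) : C.step α β ∈ {c ∈ C β | α ≤ c} :=
  csInf_mem (C.exists_ge h)

theorem step_lt [WellFoundedLT W] (h : α < β) : C.step α β < β := C.lt_of_mem (C.step_mem h).1

open Classical in
/-- The lower trace `L(α, β)` of the walk from `β` to `α`. -/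
noncomputable def lowerTrace [WellFoundedLT W] (α β : W) : Finset W :=
  if _h : α < β then
    insert (C.low α β) ((lowerTrace α (C.step α β)).filter (C.low α β ≤ ·))
  else ∅
termination_by (wellFounded_lt (α := W)).wrap β
decreasing_by exact C.step_lt _h

/-- The maximal weight `e_β(ξ)` of the walk from `β` to `ξ`. -/
noncomputable def weight [WellFoundedLT W] (β ξ : W) : ℕ :=
  open Classical in if _h : ξ < β then max (C β ∩ Iio ξ).ncard (weight (C.step ξ β) ξ) else 0
termination_by (wellFounded_lt (α := W)).wrap β
decreasing_by exact C.step_lt _h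

variable [WellFoundedLT W]

@[simp]
theorem lowerTrace_self : C.lowerTrace α α = ∅ := by
  rw [lowerTrace, dif_neg (lt_irrefl α)]

theorem mem_lowerTrace (h : α < β) : x ∈ C.lowerTrace α β ↔
    x = C.low α β ∨ x ∈ C.lowerTrace α (C.step α β) ∧ C.low α β ≤ x := by
  rw [lowerTrace, dif_pos h, Finset.mem_insert, Finset.mem_filter]

theorem weight_of_lt (h : α < β) :
    C.weight β α = max (C β ∩ Iio α).ncard (C.weight (C.step α β) α) := by
  rw [weight, dif_pos h]

theorem low_mem_lowerTrace (h : α < β) : C.low α β ∈ C.lowerTrace α β :=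
  (C.mem_lowerTrace h).2 (.inl rfl)

variable {C}

theorem low_le_of_mem_lowerTrace (h : α < β) (hx : x ∈ C.lowerTrace α β) : C.low α β ≤ x := by
  rcases (C.mem_lowerTrace h).1 hx with rfl | ⟨-, hx⟩
  exacts [le_rfl, hx]

theorem lt_of_mem_lowerTrace (hα : ⊥ < α) (hx : x ∈ C.lowerTrace α β) : x < α := by
  induction β using WellFoundedLT.induction with
  | ind β ih =>
    by_cases h : α < β
    · rcases (C.mem_lowerTrace h).1 hx with rfl | ⟨hx, -⟩
      exacts [C.low_lt hα h, ih _ (C.step_lt h) hx]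
    · rw [lowerTrace, dif_neg h] at hx
      exact absurd hx (Finset.notMem_empty x)

/-- If `L(β, γ)` lies below `L(α, β)`, then `C γ` misses `[α, β)`, so that the walks from `γ` to `α`
and to `β` take the same first step; by induction the former passes through `β`. -/
theorem mem_lowerTrace_trans (hα : ⊥ < α) (hαβ : α < β) (hβγ : β ≤ γ)
    (h : ∀ x ∈ C.lowerTrace β γ, ∀ y ∈ C.lowerTrace α β, x < y) :
    x ∈ C.lowerTrace α γ ↔ x ∈ C.lowerTrace α β ∨ x ∈ C.lowerTrace β γ := by
  induction γ using WellFoundedLT.induction with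
  | ind γ ih =>
    rcases hβγ.eq_or_lt with rfl | hβγ
    · simp
    have hlow : ∀ y ∈ C.lowerTrace α β, C.low β γ < y := h _ (C.low_mem_lowerTrace hβγ)
    have hgap : ∀ c ∈ C γ, c < β → c < α := fun c hc hcβ ↦
      (C.le_low hβγ hc hcβ).trans_lt <|
        (hlow _ (C.low_mem_lowerTrace hαβ)).trans (C.low_lt hα hαβ)
    have ih' := ih (C.step β γ) (C.step_lt hβγ) (C.step_mem hβγ).2 fun z hz y hy ↦ by
      by_cases hz' : C.low β γ ≤ z
      · exact h z ((C.mem_lowerTrace hβγ).2 (.inr ⟨hz, hz'⟩)) y hy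
      · exact (not_le.1 hz').trans (hlow y hy)
    rw [C.mem_lowerTrace (hαβ.trans hβγ), C.mem_lowerTrace hβγ, low_eq_low hαβ.le hgap,
      step_eq_step hαβ.le hgap, ih']
    have := fun hx ↦ (hlow x hx).le
    tauto

theorem exists_forall_le_lowerTrace (hγ : γ < δ) :
    ∃ η < δ, ∀ α, η < α → α < δ → ∀ x ∈ C.lowerTrace α δ, γ ≤ x := by
  obtain ⟨c, hc, hγc⟩ := C.exists_ge hγ
  exact ⟨c, C.lt_of_mem hc, fun α hcα hα x hx ↦
    hγc.trans ((C.le_low hα hc hcα).trans (low_le_of_mem_lowerTrace hα hx))⟩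

theorem exists_forall_lt_weight_self (hδ : IsSuccLimit δ) (N : ℕ) :
    ∃ η < δ, ∀ ξ, η ≤ ξ → ξ < δ → N < C.weight δ ξ := by
  obtain ⟨t, ht, hcard⟩ := (infinite_of_isSuccLimit (C := C) hδ).exists_subset_card_eq (N + 1)
  obtain ⟨η, hη, hlt⟩ := exists_lt_forall_lt_of_finset hδ fun c hc ↦ C.lt_of_mem (ht hc)
  refine ⟨η, hη, fun ξ hηξ hξ ↦ ?_⟩
  have hsub : (t : Set W) ⊆ C δ ∩ Iio ξ := fun c hc ↦ ⟨ht hc, (hlt c hc).trans_le hηξ⟩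
  calc N < (t : Set W).ncard := by simp [hcard]
    _ ≤ (C δ ∩ Iio ξ).ncard := ncard_le_ncard hsub (C.finite_inter_Iio hξ)
    _ ≤ C.weight δ ξ := by rw [C.weight_of_lt hξ]; exact le_max_left _ _

theorem exists_forall_weight_eq (hδ : IsSuccLimit δ) (h : δ ≤ β) :
    ∃ η < δ, ∀ ξ, η ≤ ξ → ξ < δ → C.weight β ξ = C.weight δ ξ := by
  induction β using WellFoundedLT.induction with
  | ind β ih =>
    rcases h.eq_or_lt with rfl | h
    · exact ⟨⊥, hδ.bot_lt, fun _ _ _ ↦ rfl⟩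
    obtain ⟨η₁, hη₁, heq⟩ := ih (C.step δ β) (C.step_lt h) (C.step_mem h).2
    obtain ⟨η₂, hη₂, hlarge⟩ := exists_forall_lt_weight_self (C := C) hδ (C β ∩ Iio δ).ncard
    obtain ⟨η₃, hη₃, hlow⟩ := hδ.lt_iff_exists_lt.1 (C.low_lt hδ.bot_lt h)
    refine ⟨η₁ ⊔ η₂ ⊔ η₃, by simp [hη₁, hη₂, hη₃], fun ξ hξ hξδ ↦ ?_⟩
    simp only [sup_le_iff] at hξ
    have hstep : C.step ξ β = C.step δ β := step_eq_step hξδ.le fun c hc hcδ ↦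
      (C.le_low h hc hcδ).trans_lt (hlow.trans_le hξ.2)
    rw [C.weight_of_lt (hξδ.trans h), hstep, heq ξ hξ.1.1 hξδ]
    refine max_eq_right (le_trans ?_ (hlarge ξ hξ.1.2 hξδ).le)
    exact ncard_le_ncard (inter_subset_inter_right _ (Iio_subset_Iio hξδ.le))
      (C.finite_inter_Iio h)

theorem exists_forall_lt_weight (hδ : IsSuccLimit δ) (h : δ ≤ β) (N : ℕ) :
    ∃ η < δ, ∀ ξ, η ≤ ξ → ξ < δ → N < C.weight β ξ := by
  obtain ⟨η₁, hη₁, heq⟩ := exists_forall_weight_eq (C := C) hδ h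
  obtain ⟨η₂, hη₂, hlarge⟩ := exists_forall_lt_weight_self (C := C) hδ N
  refine ⟨η₁ ⊔ η₂, by simp [hη₁, hη₂], fun ξ hξ hξδ ↦ ?_⟩
  rw [heq ξ (le_sup_left.trans hξ) hξδ]
  exact hlarge ξ (le_sup_right.trans hξ) hξδ

end CSequence

end Walks

section OscillationCount

variable {X : Type*} [LinearOrder X] {s t s' t' : X → ℕ} {F G H : Finset X} {g x : X}

/-- The graph of `s` crosses that of `t` upwards at the point `x` of `F`: it lies strictly above at
`x`, but not at the predecessor of `x` in `F`. -/
def IsCrossing (s t : X → ℕ) (F : Finset X) (x : X) : Prop :=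
  t x < s x ∧ ∃ y, IsGreatest (↑F ∩ Iio x) y ∧ s y ≤ t y

open Classical in
/-- The number of upward crossings of `s` over `t` along `F`. -/
noncomputable def oscCount (s t : X → ℕ) (F : Finset X) : ℕ := (F.filter (IsCrossing s t F)).card

theorem isCrossing_congr (hs : EqOn s s' F) (ht : EqOn t t' F) (hx : x ∈ F) :
    IsCrossing s t F x ↔ IsCrossing s' t' F x := by
  refine and_congr (by rw [hs hx, ht hx]) (exists_congr fun y ↦ and_congr_right fun hy ↦ ?_)
  rw [hs hy.1.1, ht hy.1.1]

theorem oscCount_congr (hs : EqOn s s' F) (ht : EqOn t t' F) :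
    oscCount s t F = oscCount s' t' F := by
  classical
  exact congrArg Finset.card (Finset.filter_congr fun _ hx ↦ isCrossing_congr hs ht hx)

theorem isCrossing_union_left (hGH : ∀ x ∈ G, ∀ y ∈ H, x < y) (hx : x ∈ G) :
    IsCrossing s t (G ∪ H) x ↔ IsCrossing s t G x := by
  have : (↑(G ∪ H) ∩ Iio x : Set X) = ↑G ∩ Iio x := by
    ext y
    have := hGH x hx y
    grind
  rw [IsCrossing, this, IsCrossing]

open Classical in
theorem oscCount_union (hGH : ∀ x ∈ G, ∀ y ∈ H, x < y) :
    oscCount s t (G ∪ H) = oscCount s t G + (H.filter (IsCrossing s t (G ∪ H))).card := by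
  have hdisj : Disjoint G H := Finset.disjoint_left.2 fun x hG hH ↦ (hGH x hG x hH).false
  rw [oscCount, Finset.filter_union, Finset.card_union_of_disjoint
    (Finset.disjoint_filter_filter hdisj), oscCount]
  exact congrArg (fun K ↦ K.card + _)
    (Finset.filter_congr fun x hx ↦ isCrossing_union_left hGH hx)

theorem oscCount_union_of_forall_le (hGH : ∀ x ∈ G, ∀ y ∈ H, x < y) (hH : ∀ x ∈ H, s x ≤ t x) :
    oscCount s t (G ∪ H) = oscCount s t G := by
  classical
  rw [oscCount_union hGH, Finset.filter_false_of_mem fun x hx hcross ↦ hcross.1.not_ge (hH x hx),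
    Finset.card_empty, add_zero]

/-- The least element of `H` is the only new crossing. -/
theorem oscCount_union_of_forall_lt (hGH : ∀ x ∈ G, ∀ y ∈ H, x < y) (hg : IsGreatest (G : Set X) g)
    (hle : s g ≤ t g) (hne : H.Nonempty) (hH : ∀ x ∈ H, t x < s x) :
    oscCount s t (G ∪ H) = oscCount s t G + 1 := by
  classical
  rw [oscCount_union hGH, Nat.add_left_cancel_iff, Finset.card_eq_one]
  have hmin := Finset.min'_mem H hne
  refine ⟨H.min' hne, Finset.ext fun x ↦ ?_⟩
  rw [Finset.mem_filter, Finset.mem_singleton]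
  constructor
  · rintro ⟨hx, -, y, ⟨⟨hy, -⟩, hmax⟩, hle'⟩
    refine (Finset.min'_le H x hx).antisymm' (le_of_not_gt fun hlt ↦ ?_)
    have hminy : H.min' hne ≤ y := hmax ⟨by simp [hmin], hlt⟩
    rcases Finset.mem_union.1 hy with hy | hy
    · exact (hGH y hy _ hmin).not_ge hminy
    · exact (hH y hy).not_ge hle'
  · rintro rfl
    refine ⟨hmin, hH _ hmin, g, ⟨⟨by simp [Finset.mem_coe.1 hg.1], hGH g hg.1 _ hmin⟩, ?_⟩, hle⟩
    rintro y ⟨hy, hlt⟩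
    rcases Finset.mem_union.1 hy with hy | hy
    · exact hg.2 hy
    · exact absurd hlt (Finset.min'_le H y hy).not_gt

theorem oscCount_union_of_isGreatest (hGH : ∀ x ∈ G, ∀ y ∈ H, x < y)
    (hg : IsGreatest (G : Set X) g) (hlt : t g < s g) :
    oscCount s t (G ∪ H) = oscCount s t G + oscCount s t H := by
  classical
  rw [oscCount_union hGH, oscCount.eq_1 s t H]
  congr 2
  refine Finset.filter_congr fun x hx ↦ and_congr_right fun _ ↦ exists_congr fun y ↦
    and_congr_left fun hle ↦ ⟨fun ⟨⟨hy, hyx⟩, hmax⟩ ↦ ?_, fun ⟨⟨hy, hyx⟩, hmax⟩ ↦ ?_⟩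
  · have hgy : g ≤ y := hmax ⟨by simp [Finset.mem_coe.1 hg.1], hGH g hg.1 x hx⟩
    have hyH : y ∈ H := (Finset.mem_union.1 hy).resolve_left fun hyG ↦
      (hlt.trans_eq (congrArg s (hgy.antisymm (hg.2 hyG)))).not_ge
        (hle.trans_eq (congrArg t (hgy.antisymm (hg.2 hyG)).symm))
    exact ⟨⟨hyH, hyx⟩, fun z hz ↦ hmax ⟨Finset.mem_union_right G hz.1, hz.2⟩⟩
  · refine ⟨⟨Finset.mem_union_right G hy, hyx⟩, fun z ⟨hz, hzx⟩ ↦ ?_⟩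
    rcases Finset.mem_union.1 hz with hz | hz
    · exact (hGH z hz y hy).le
    · exact hmax ⟨hz, hzx⟩

end OscillationCount

section Oscillation

variable {W : Type*} [ConditionallyCompleteLinearOrderBot W] [WellFoundedLT W] {C : CSequence W}
  {ι κ : Type*} {A : Set (ι → W)} {B : Set (κ → W)} {a a' : ι → W} {b b' : κ → W}
  {α β γ δ g : W}

namespace CSequence

variable (C) in
/-- Moore's oscillation number `osc(α, β)`. -/
noncomputable def osc (α β : W) : ℕ := oscCount (C.weight α) (C.weight β) (C.lowerTrace α β)

variable (C) in
/-- The weight functions of the tuples `a` and `a'` agree on the set `U`. -/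
def AgreeOn (U : Set W) (a a' : ι → W) : Prop := ∀ i, EqOn (C.weight (a' i)) (C.weight (a i)) U

theorem AgreeOn.mono {U V : Set W} (h : C.AgreeOn V a a') (hUV : U ⊆ V) : C.AgreeOn U a a' :=
  fun i ↦ (h i).mono hUV

theorem lowerTrace_eq_union (hα : ⊥ < α) (hαβ : α < β) (hβγ : β ≤ γ)
    (h : ∀ x ∈ C.lowerTrace β γ, ∀ y ∈ C.lowerTrace α β, x < y) :
    C.lowerTrace α γ = C.lowerTrace β γ ∪ C.lowerTrace α β := by
  ext x
  rw [mem_lowerTrace_trans hα hαβ hβγ h, Finset.mem_union, or_comm]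

theorem osc_eq_oscCount_add (hα : ⊥ < α) (hαδ : α < δ) (hδβ : δ ≤ β)
    (hsep : ∀ x ∈ C.lowerTrace δ β, ∀ y ∈ C.lowerTrace α δ, x < y)
    (hw : EqOn (C.weight β) (C.weight δ) (C.lowerTrace α δ))
    (hg : IsGreatest (C.lowerTrace δ β : Set W) g) (hlt : C.weight β g < C.weight α g) :
    C.osc α β = oscCount (C.weight α) (C.weight β) (C.lowerTrace δ β) +
      oscCount (C.weight α) (C.weight δ) (C.lowerTrace α δ) := by
  rw [osc, lowerTrace_eq_union hα hαδ hδβ hsep, oscCount_union_of_isGreatest hsep hg hlt,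
    oscCount_congr (fun _ _ ↦ rfl) hw]

theorem exists_finset_lowerTrace_subset [Finite κ] (hδ : ⊥ < δ) (b : κ → W) :
    ∃ U : Finset W, (∀ j, C.lowerTrace δ (b j) ⊆ U) ∧ ∀ x ∈ U, x < δ := by
  classical
  have := Fintype.ofFinite κ
  refine ⟨Finset.univ.biUnion fun j ↦ C.lowerTrace δ (b j),
    fun j ↦ Finset.subset_biUnion_of_mem (fun j ↦ C.lowerTrace δ (b j)) (Finset.mem_univ j), ?_⟩
  simp only [Finset.mem_biUnion, Finset.mem_univ, true_and, forall_exists_index]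
  exact fun x j hx ↦ lt_of_mem_lowerTrace hδ hx

theorem exists_forall_weight_eq_of_finite [Finite κ] (hδ : IsSuccLimit δ) (hb : ∀ j, δ ≤ b j) :
    ∃ γ < δ, ∀ j, ∀ x, γ ≤ x → x < δ → C.weight (b j) x = C.weight δ x := by
  choose η hη heq using fun j ↦ exists_forall_weight_eq (C := C) hδ (hb j)
  obtain ⟨γ, hγ, hlt⟩ := exists_lt_forall_lt_of_finite hδ hη
  exact ⟨γ, hγ, fun j x hx ↦ heq j x ((hlt j).le.trans hx)⟩

variable (C) in
/-- Two tuples above `δ` drawn from `A` and `B` whose weight functions all coincide on `[γ, δ)`. -/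
structure IsConfiguration (A : Set (ι → W)) (B : Set (κ → W)) (γ δ : W) (a : ι → W) (b : κ → W) :
    Prop where
  left_mem : a ∈ A
  right_mem : b ∈ B
  le_left (i) : δ ≤ a i
  le_right (j) : δ ≤ b j
  weight_eq (i j x) : γ ≤ x → x < δ → C.weight (a i) x = C.weight (b j) x

theorem exists_isConfiguration [Finite ι] [Finite κ] (hδ : IsSuccLimit δ) (ha : a ∈ A) (hb : b ∈ B)
    (haδ : ∀ i, δ ≤ a i) (hbδ : ∀ j, δ ≤ b j) : ∃ γ < δ, C.IsConfiguration A B γ δ a b := by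
  obtain ⟨γ, hγ, heq⟩ := exists_forall_weight_eq_of_finite (C := C) hδ haδ
  obtain ⟨γ', hγ', heq'⟩ := exists_forall_weight_eq_of_finite (C := C) hδ hbδ
  refine ⟨γ ⊔ γ', max_lt hγ hγ', ha, hb, haδ, hbδ, fun i j x hx hxδ ↦ ?_⟩
  rw [sup_le_iff] at hx
  rw [heq i x hx.1 hxδ, heq' j x hx.2 hxδ]

theorem IsConfiguration.mono {γ' : W} (h : C.IsConfiguration A B γ δ a b) (hγ : γ ≤ γ') :
    C.IsConfiguration A B γ' δ a b :=
  { h with weight_eq := fun i j x hx ↦ h.weight_eq i j x (hγ.trans hx) }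

/-- The restrictions to the finite set `U` of the weight functions of two tuples, together with the
lower traces of the second one. There are only countably many snapshots over a given `U`, so that
they can serve as parameters in `eventually_reflects`. -/
abbrev Snapshot (U : Finset W) (ι κ : Type*) := (U → ι → ℕ) × (U → κ → ℕ) × (κ → Finset U)

variable (C) in
/-- The tuples `a` and `b`, with lower traces taken from `δ`, have snapshot `s`. -/
def Realizes {U : Finset W} (s : Snapshot U ι κ) (δ : W) (a : ι → W) (b : κ → W) : Prop :=
  (∀ x : U, ∀ i, C.weight (a i) x = s.1 x i) ∧ (∀ x : U, ∀ j, C.weight (b j) x = s.2.1 x j) ∧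
    ∀ j, C.lowerTrace δ (b j) = (s.2.2 j).map (.subtype _)

theorem exists_realizes {U : Finset W} (a : ι → W) (hb : ∀ j, C.lowerTrace δ (b j) ⊆ U) :
    ∃ s : Snapshot U ι κ, C.Realizes s δ a b :=
  ⟨(fun x i ↦ C.weight (a i) x, fun x j ↦ C.weight (b j) x,
    fun j ↦ (C.lowerTrace δ (b j)).subtype (· ∈ U)), fun _ _ ↦ rfl, fun _ _ ↦ rfl,
    fun j ↦ (Finset.subtype_map_of_mem (hb j)).symm⟩

theorem Realizes.agreeOn {U : Finset W} {s : Snapshot U ι κ} {δ' : W} (h : C.Realizes s δ a b)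
    (h' : C.Realizes s δ' a' b') : C.AgreeOn U a a' ∧ C.AgreeOn U b b' ∧
      ∀ j, C.lowerTrace δ' (b' j) = C.lowerTrace δ (b j) :=
  ⟨fun i x hx ↦ (h'.1 ⟨x, hx⟩ i).trans (h.1 ⟨x, hx⟩ i).symm,
    fun j x hx ↦ (h'.2.1 ⟨x, hx⟩ j).trans (h.2.1 ⟨x, hx⟩ j).symm,
    fun j ↦ (h'.2.2 j).trans (h.2.2 j).symm⟩

variable (C) in
/-- The tuples `a'` and `b'` retain the weights of `a` and `b` on the lower traces from `δ` of `b`,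
each of which they lengthen by the same set `F`, on which their weights are in the relation `r`. -/
structure IsEndExtension (r : ℕ → ℕ → Prop) (δ : W) (a : ι → W) (b : κ → W) (F : Finset W)
    (a' : ι → W) (b' : κ → W) : Prop where
  nonempty : F.Nonempty
  lt (j) : ∀ x ∈ C.lowerTrace δ (b j), ∀ y ∈ F, x < y
  lowerTrace_eq (j) : C.lowerTrace δ (b' j) = C.lowerTrace δ (b j) ∪ F
  agreeOn_left (j) : C.AgreeOn (C.lowerTrace δ (b j)) a a'
  agreeOn_right (j) : C.AgreeOn (C.lowerTrace δ (b j)) b b'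
  rel (i j) : ∀ x ∈ F, r (C.weight (a' i) x) (C.weight (b' j) x)

namespace IsEndExtension

variable {r : ℕ → ℕ → Prop} {F : Finset W}

theorem lowerTrace_subset (h : C.IsEndExtension r δ a b F a' b') (j : κ) :
    C.lowerTrace δ (b j) ⊆ C.lowerTrace δ (b' j) :=
  h.lowerTrace_eq j ▸ Finset.subset_union_left

theorem exists_isGreatest (h : C.IsEndExtension r δ a b F a' b') (i : ι) (j : κ) :
    ∃ g, IsGreatest (C.lowerTrace δ (b' j) : Set W) g ∧
      r (C.weight (a' i) g) (C.weight (b' j) g) := by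
  have hmem := F.max'_mem h.nonempty
  refine ⟨F.max' h.nonempty, ?_, h.rel i j _ hmem⟩
  rw [h.lowerTrace_eq, Finset.coe_union]
  exact ⟨.inr hmem, fun x hx ↦ hx.elim (fun hx ↦ (h.lt j x hx _ hmem).le) (F.le_max' x)⟩

theorem oscCount_eq_oscCount (h : C.IsEndExtension r δ a b F a' b') (i : ι) (j : κ) :
    oscCount (C.weight (a' i)) (C.weight (b' j)) (C.lowerTrace δ (b j)) =
      oscCount (C.weight (a i)) (C.weight (b j)) (C.lowerTrace δ (b j)) :=
  oscCount_congr (h.agreeOn_left j i) (h.agreeOn_right j j)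

theorem oscCount_eq (h : C.IsEndExtension (· = ·) δ a b F a' b') (i : ι) (j : κ) :
    oscCount (C.weight (a' i)) (C.weight (b' j)) (C.lowerTrace δ (b' j)) =
      oscCount (C.weight (a i)) (C.weight (b j)) (C.lowerTrace δ (b j)) := by
  rw [h.lowerTrace_eq, oscCount_union_of_forall_le (h.lt j) fun x hx ↦ (h.rel i j x hx).le,
    h.oscCount_eq_oscCount]

theorem oscCount_eq_add_one (h : C.IsEndExtension (· > ·) δ a b F a' b') {i : ι} {j : κ}
    (hg : IsGreatest (C.lowerTrace δ (b j) : Set W) g) (hle : C.weight (a i) g ≤ C.weight (b j) g) :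
    oscCount (C.weight (a' i)) (C.weight (b' j)) (C.lowerTrace δ (b' j)) =
      oscCount (C.weight (a i)) (C.weight (b j)) (C.lowerTrace δ (b j)) + 1 := by
  rw [← h.agreeOn_left j i hg.1, ← h.agreeOn_right j j hg.1] at hle
  rw [h.lowerTrace_eq, oscCount_union_of_forall_lt (h.lt j) hg hle h.nonempty (h.rel i j),
    h.oscCount_eq_oscCount]

end IsEndExtension

variable (C) in
/-- A single tuple `a` together with tuples `b 0, …, b n` whose lower traces from `δ` carry
oscillation numbers with `a` increasing by one at each rung. The condition on the greatest elements
prevents crossings at the junction when the lower traces are prolonged below `δ`. -/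
structure IsLadder (δ : W) (n : ℕ) (a : ι → W) (b : ℕ → κ → W) : Prop where
  lowerTrace_subset (m) : m ≤ n → ∀ j, C.lowerTrace δ (b m j) ⊆ C.lowerTrace δ (b n j)
  oscCount_eq (m) : m ≤ n → ∀ i j,
    oscCount (C.weight (a i)) (C.weight (b m j)) (C.lowerTrace δ (b m j)) =
      oscCount (C.weight (a i)) (C.weight (b 0 j)) (C.lowerTrace δ (b 0 j)) + m
  exists_isGreatest (m) : m ≤ n → ∀ i j, ∃ g, IsGreatest (C.lowerTrace δ (b m j) : Set W) g ∧
    C.weight (b m j) g < C.weight (a i) g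

theorem IsEndExtension.isLadder {F : Finset W} (h : C.IsEndExtension (· > ·) δ a b F a' b') :
    C.IsLadder δ 0 a' fun _ ↦ b' where
  lowerTrace_subset _ _ _ := subset_rfl
  oscCount_eq m hm _ _ := by rw [Nat.le_zero.1 hm, add_zero]
  exists_isGreatest _ _ := h.exists_isGreatest

theorem IsLadder.congr_left {n : ℕ} {b : ℕ → κ → W} (h : C.IsLadder δ n a b)
    (ha : ∀ j, C.AgreeOn (C.lowerTrace δ (b n j)) a a') : C.IsLadder δ n a' b where
  lowerTrace_subset := h.lowerTrace_subset
  oscCount_eq m hm i j := by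
    have hcongr (k) (hk : k ≤ n) :
        oscCount (C.weight (a' i)) (C.weight (b k j)) (C.lowerTrace δ (b k j)) =
          oscCount (C.weight (a i)) (C.weight (b k j)) (C.lowerTrace δ (b k j)) :=
      oscCount_congr ((ha j).mono (h.lowerTrace_subset k hk j) i) fun _ _ ↦ rfl
    rw [hcongr m hm, hcongr 0 n.zero_le, h.oscCount_eq m hm]
  exists_isGreatest m hm i j := by
    obtain ⟨g, hg, hlt⟩ := h.exists_isGreatest m hm i j
    exact ⟨g, hg, by rwa [(ha j).mono (h.lowerTrace_subset m hm j) i hg.1]⟩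

/-- The first extension keeps the oscillation number but leaves the weights equal at the top, so
that the second one creates exactly one crossing. -/
theorem IsLadder.update {n : ℕ} {b : ℕ → κ → W} {a₁ a₂ : ι → W} {b₁ b₂ : κ → W} {F G : Finset W}
    (h : C.IsLadder δ n a b) (h₁ : C.IsEndExtension (· = ·) δ a (b n) F a₁ b₁)
    (h₂ : C.IsEndExtension (· > ·) δ a₁ b₁ G a₂ b₂) :
    C.IsLadder δ (n + 1) a₂ (Function.update b (n + 1) b₂) := by
  have hsub (j) : C.lowerTrace δ (b n j) ⊆ C.lowerTrace δ (b₂ j) :=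
    (h₁.lowerTrace_subset j).trans (h₂.lowerTrace_subset j)
  have hagree (j) : C.AgreeOn (C.lowerTrace δ (b n j)) a a₂ := fun i ↦
    ((h₂.agreeOn_left j).mono (h₁.lowerTrace_subset j) i).trans (h₁.agreeOn_left j i)
  have h' := h.congr_left hagree
  have hold {m} (hm : m ≤ n) : Function.update b (n + 1) b₂ m = b m :=
    Function.update_of_ne (by lia) _ _
  refine ⟨fun m hm j ↦ ?_, fun m hm i j ↦ ?_, fun m hm i j ↦ ?_⟩ <;>
    rcases Nat.le_add_one_iff.1 hm with hm | rfl
  · rw [hold hm, Function.update_self]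
    exact (h.lowerTrace_subset m hm j).trans (hsub j)
  · rfl
  · rw [hold hm, hold n.zero_le]
    exact h'.oscCount_eq m hm i j
  · obtain ⟨g, hg, heq⟩ := h₁.exists_isGreatest i j
    rw [Function.update_self, hold n.zero_le, h₂.oscCount_eq_add_one hg heq.le, h₁.oscCount_eq,
      ← add_assoc, ← h'.oscCount_eq n le_rfl, oscCount_congr (hagree j i) fun _ _ ↦ rfl]
  · rw [hold hm]
    exact h'.exists_isGreatest m hm i j
  · rw [Function.update_self]
    exact h₂.exists_isGreatest i j

theorem IsLadder.osc_eq {n : ℕ} {b : ℕ → κ → W} (h : C.IsLadder δ n a b) {U : Finset W}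
    (hU : ∀ j, C.lowerTrace δ (b n j) ⊆ U) (hagree : C.AgreeOn U a a') (hpos : ∀ i, ⊥ < a' i)
    (hlt : ∀ i, a' i < δ) (hb : ∀ m j, δ ≤ b m j)
    (hsep : ∀ x ∈ U, ∀ i, ∀ y ∈ C.lowerTrace (a' i) δ, x < y)
    (hw : ∀ m ≤ n, ∀ i j, EqOn (C.weight (b m j)) (C.weight δ) (C.lowerTrace (a' i) δ)) {m : ℕ}
    (hm : m ≤ n) (i : ι) (j : κ) : C.osc (a' i) (b m j) = C.osc (a' i) (b 0 j) + m := by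
  have h' := h.congr_left fun j ↦ hagree.mono (hU j)
  have hosc {k} (hk : k ≤ n) : C.osc (a' i) (b k j) =
      oscCount (C.weight (a' i)) (C.weight (b k j)) (C.lowerTrace δ (b k j)) +
        oscCount (C.weight (a' i)) (C.weight δ) (C.lowerTrace (a' i) δ) := by
    obtain ⟨g, hg, hgt⟩ := h'.exists_isGreatest k hk i j
    exact osc_eq_oscCount_add (hpos i) (hlt i) (hb k j)
      (fun x hx ↦ hsep x (hU j (h.lowerTrace_subset k hk j hx)) i) (hw k hk i j) hg hgt
  rw [hosc hm, hosc n.zero_le, h'.oscCount_eq m hm, add_right_comm]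

variable [CountableIio W] [Uncountable W]

theorem exists_of_cofinal_weight_gt [Finite ι] (hA : ∀ γ, ∃ a ∈ A, ∀ i, γ ≤ a i) :
    ∃ γ, ∀ F : Finset W, (∀ x ∈ F, γ ≤ x) → ∀ N ζ,
      ∃ a ∈ A, (∀ i, ζ ≤ a i) ∧ ∀ i, ∀ x ∈ F, N < C.weight (a i) x := by
  by_contra! hbad
  choose F hF N ζ hbad using hbad
  obtain ⟨N₀, hN₀⟩ := exists_forall_exists_eq N (R := fun γ γ' ↦ γ ≤ γ')
    (fun _ _ _ h ↦ h.trans) fun γ ↦ ⟨γ, le_rfl⟩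
  obtain ⟨δ, hδ, hrefl⟩ := (eventually_isSuccLimit.and (eventually_reflects (T := fun U ↦ U)
    fun _ γ v ↦ ∃ γ', N γ' = N₀ ∧ ↑γ ≤ γ' ∧ (∀ x ∈ F γ', x < v) ∧ ζ γ' < v)).exists
  obtain ⟨a, ha, haδ⟩ := hA δ
  choose η hη hlarge using fun i ↦ exists_forall_lt_weight (C := C) hδ (haδ i) N₀
  obtain ⟨γ, hγ, hηγ⟩ := exists_lt_forall_lt_of_finite hδ hη
  obtain ⟨v, hv, γ', rfl, hle, hFv, hζ⟩ := hrefl {γ} (by simpa) ⟨γ, by simp⟩ <| by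
    obtain ⟨γ', hN, hle⟩ := hN₀ γ
    obtain ⟨v, hv⟩ := exists_forall_lt_of_countable ((F γ').countable_toSet.insert (ζ γ'))
    exact ⟨v, γ', hN, hle, fun x hx ↦ hv x (.inr hx), hv _ (.inl rfl)⟩
  obtain ⟨i, x, hx, hxN⟩ := hbad γ' a ha fun i ↦ (hζ.trans hv).le.trans (haδ i)
  exact (hlarge i x ((hηγ i).le.trans (hle.trans (hF γ' x hx))) ((hFv x hx).trans hv)).not_ge hxN

variable (C) (A B)

theorem eventually_exists_agreeOn_weight_gt [Finite ι] : ∀ᶠ δ in clubFilter W,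
    ∀ U : Finset W, (∀ x ∈ U, x < δ) → ∀ a ∈ A, (∀ i, δ ≤ a i) →
      ∃ γ < δ, ∀ F : Finset W, (∀ x ∈ F, γ ≤ x) → ∀ N ζ,
        ∃ a' ∈ A, (∀ i, ζ ≤ a' i) ∧ C.AgreeOn U a a' ∧ ∀ i, ∀ x ∈ F, N < C.weight (a' i) x := by
  let E (U : Finset W) (t : U → ι → ℕ) := {a ∈ A | ∀ x : U, ∀ i, C.weight (a i) x = t x i}
  filter_upwards [eventually_reflects (T := fun U ↦ U → ι → ℕ) fun U t v ↦
    (∃ a ∈ E U t, ∀ i, v ≤ a i) → ∀ F : Finset W, (∀ x ∈ F, v ≤ x) → ∀ N ζ,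
      ∃ a ∈ E U t, (∀ i, ζ ≤ a i) ∧ ∀ i, ∀ x ∈ F, N < C.weight (a i) x] with δ hrefl U hU a ha haδ
  have hex (t) : ∃ v, (∃ a ∈ E U t, ∀ i, v ≤ a i) → ∀ F : Finset W, (∀ x ∈ F, v ≤ x) → ∀ N ζ,
      ∃ a ∈ E U t, (∀ i, ζ ≤ a i) ∧ ∀ i, ∀ x ∈ F, N < C.weight (a i) x := by
    by_cases hcof : ∀ γ, ∃ a ∈ E U t, ∀ i, γ ≤ a i
    · exact (exists_of_cofinal_weight_gt hcof).imp fun _ h _ ↦ h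
    · obtain ⟨v, hv⟩ := not_forall.1 hcof
      exact ⟨v, fun h ↦ (hv h).elim⟩
  obtain ⟨γ, hγ, h⟩ := hrefl U hU (fun x i ↦ C.weight (a i) x) (hex _)
  refine ⟨γ, hγ, fun F hF N ζ ↦ ?_⟩
  obtain ⟨a', ha', hζ, hlarge⟩ :=
    h ⟨a, ⟨ha, fun _ _ ↦ rfl⟩, fun i ↦ hγ.le.trans (haδ i)⟩ F hF N ζ
  exact ⟨a', ha'.1, hζ, fun i x hx ↦ ha'.2 ⟨x, hx⟩ i, hlarge⟩

theorem eventually_exists_agreeOn_mem_Ico [Finite ι] : ∀ᶠ δ in clubFilter W,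
    ∀ U : Finset W, (∀ x ∈ U, x < δ) → ∀ γ < δ, ∀ a ∈ A, (∀ i, δ ≤ a i) →
      ∃ a' ∈ A, (∀ i, a' i ∈ Ico γ δ) ∧ C.AgreeOn U a a' := by
  filter_upwards [eventually_reflects (T := fun U ↦ U × (U → ι → ℕ)) fun U t v ↦
    ∃ a ∈ A, (∀ i, a i ∈ Ico t.1.1 v) ∧ ∀ x : U, ∀ i, C.weight (a i) x = t.2 x i]
    with δ hrefl U hU γ hγ a ha haδ
  obtain ⟨v, hv, a', ha', hmem, hagree⟩ := hrefl (insert γ U) (by simpa using ⟨hγ, hU⟩)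
    (⟨γ, Finset.mem_insert_self γ U⟩, fun x i ↦ C.weight (a i) x) <| by
      obtain ⟨v, hv⟩ := exists_forall_lt_of_finite a
      exact ⟨v, a, ha, fun i ↦ ⟨hγ.le.trans (haδ i), hv i⟩, fun _ _ ↦ rfl⟩
  exact ⟨a', ha', fun i ↦ ⟨(hmem i).1, (hmem i).2.trans hv⟩, fun i x hx ↦
    hagree ⟨x, Finset.mem_insert_of_mem hx⟩ i⟩

/-- Every `ζ < δ` beyond some `ξ < δ` has its lower trace from `δ` above `γ`. By reflection such a
`ζ` works for cofinally many `δ'` in place of `δ`, and reflecting once more `ζ = δ` does. -/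
theorem eventually_exists_isConfiguration [Finite ι] [Finite κ] : ∀ᶠ δ in clubFilter W,
    ∀ U : Finset W, (∀ x ∈ U, x < δ) → ∀ γ < δ, ∀ a b, C.IsConfiguration A B γ δ a b →
      (∀ j, C.lowerTrace δ (b j) ⊆ U) →
      ∃ δ' > δ, ∃ a' b', C.IsConfiguration A B γ δ' a' b' ∧
        (C.AgreeOn U a a' ∧ C.AgreeOn U b b' ∧ ∀ j, C.lowerTrace δ' (b' j) = C.lowerTrace δ (b j)) ∧
        ∀ x ∈ C.lowerTrace δ δ', γ ≤ x := by
  let D {U : Finset W} (s : Snapshot U ι κ) (γ ζ δ : W) : Prop :=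
    (∃ a b, C.IsConfiguration A B γ δ a b ∧ C.Realizes s δ a b) ∧ ∀ x ∈ C.lowerTrace ζ δ, γ ≤ x
  filter_upwards [eventually_reflects (T := fun U ↦ Snapshot U ι κ × U × U) fun U t v ↦
    ∃ ζ < v, ↑t.2.2 < ζ ∧ ∀ δ' ≥ v, ¬ D t.1 t.2.1 ζ δ'] with δ hrefl U hU γ hγ a b hab hbU
  obtain ⟨ξ, hξ, htrace⟩ := exists_forall_le_lowerTrace (C := C) hγ
  let V := insert γ (insert ξ U)
  have hUV : U ⊆ V := fun x hx ↦ by simp [V, hx]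
  obtain ⟨s, hs⟩ := exists_realizes (U := V) a fun j ↦ (hbU j).trans hUV
  suffices h : ∃ δ' > δ, D s γ δ δ' by
    obtain ⟨δ', hδ', ⟨a', b', hab', hs'⟩, hle⟩ := h
    obtain ⟨ha, hb, hL⟩ := hs.agreeOn hs'
    exact ⟨δ', hδ', a', b', hab', ⟨ha.mono hUV, hb.mono hUV, hL⟩, hle⟩
  by_contra! hbad
  obtain ⟨w, hw⟩ := exists_gt δ
  obtain ⟨v, hv, ζ, hζ, hξζ, hnot⟩ := hrefl V (by simpa [V] using ⟨hγ, hξ, hU⟩)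
    (s, ⟨γ, by simp [V]⟩, ⟨ξ, by simp [V]⟩)
    ⟨w, δ, hw, hξ, fun δ' hδ' ↦ hbad δ' (hw.trans_le hδ')⟩
  exact hnot δ hv.le ⟨⟨a, b, hab, hs⟩, htrace ζ hξζ (hζ.trans hv)⟩

theorem eventually_exists_isEndExtension_eq [Finite ι] [Finite κ] : ∀ᶠ δ in clubFilter W,
    ∀ γ < δ, ∀ a ∈ A ∩ Ici fun _ ↦ δ, ∀ b ∈ B ∩ Ici fun _ ↦ δ,
      ∃ a' ∈ A ∩ Ici fun _ ↦ δ, ∃ b' ∈ B ∩ Ici fun _ ↦ δ, ∃ F : Finset W,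
        C.IsEndExtension (· = ·) δ a b F a' b' ∧ ∀ x ∈ F, γ ≤ x := by
  filter_upwards [eventually_isSuccLimit, C.eventually_exists_isConfiguration A B]
    with δ hδ hext γ hγ a ha b hb
  obtain ⟨U, hbU, hU⟩ := exists_finset_lowerTrace_subset (C := C) hδ.bot_lt b
  obtain ⟨γ₁, hγ₁, hUγ₁⟩ := exists_lt_forall_lt_of_finset hδ hU
  obtain ⟨γ₂, hγ₂, hconf⟩ := exists_isConfiguration (C := C) hδ ha.1 hb.1 ha.2 hb.2
  let γ' := γ ⊔ γ₁ ⊔ γ₂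
  obtain ⟨δ', hδδ', a', b', hconf', ⟨haU, hbU', htrace⟩, hle⟩ :=
    hext U hU γ' (max_lt (max_lt hγ hγ₁) hγ₂) a b (hconf.mono le_sup_right) hbU
  have hlt (j) : ∀ x ∈ C.lowerTrace δ (b j), ∀ y ∈ C.lowerTrace δ δ', x < y := fun x hx y hy ↦
    (hUγ₁ x (hbU j hx)).trans_le ((le_sup_right.trans le_sup_left).trans (hle y hy))
  refine ⟨a', ⟨hconf'.left_mem, fun i ↦ hδδ'.le.trans (hconf'.le_left i)⟩, b',
    ⟨hconf'.right_mem, fun j ↦ hδδ'.le.trans (hconf'.le_right j)⟩, C.lowerTrace δ δ',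
    ⟨⟨_, C.low_mem_lowerTrace hδδ'⟩, hlt, fun j ↦ ?_, fun j ↦ haU.mono (hbU j),
      fun j ↦ hbU'.mono (hbU j), fun i j x hx ↦ ?_⟩,
    fun x hx ↦ (le_sup_left.trans le_sup_left).trans (hle x hx)⟩
  · rw [← htrace j]
    exact lowerTrace_eq_union hδ.bot_lt hδδ' (hconf'.le_right j) (htrace j ▸ hlt j)
  · exact hconf'.weight_eq i j x (hle x hx) ((lt_of_mem_lowerTrace hδ.bot_lt hx).trans hδδ')

theorem eventually_exists_isEndExtension_gt [Finite ι] [Finite κ] : ∀ᶠ δ in clubFilter W,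
    ∀ a ∈ A ∩ Ici fun _ ↦ δ, ∀ b ∈ B ∩ Ici fun _ ↦ δ,
      ∃ a' ∈ A ∩ Ici fun _ ↦ δ, ∃ b' ∈ B ∩ Ici fun _ ↦ δ, ∃ F : Finset W,
        C.IsEndExtension (· > ·) δ a b F a' b' := by
  filter_upwards [eventually_isSuccLimit, C.eventually_exists_isEndExtension_eq A B,
    C.eventually_exists_agreeOn_weight_gt A] with δ hδ hext hlarge a ha b hb
  obtain ⟨U, hbU, hU⟩ := exists_finset_lowerTrace_subset (C := C) hδ.bot_lt b
  obtain ⟨γ, hγ, hγF⟩ := hlarge U hU a ha.1 ha.2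
  obtain ⟨_, _, b', hb', F, hF, hle⟩ := hext γ hγ a ha b hb
  obtain ⟨N, hN⟩ := (finite_iUnion fun j ↦ F.finite_toSet.image (C.weight (b' j))).bddAbove
  obtain ⟨a', ha', hδa', haU, hlt⟩ := hγF F hle N δ
  exact ⟨a', ⟨ha', hδa'⟩, b', hb', F, { hF with
    agreeOn_left := fun j ↦ haU.mono (hbU j)
    rel := fun i j x hx ↦
      (hN (mem_iUnion.2 ⟨j, mem_image_of_mem _ hx⟩)).trans_lt (hlt i x hx) }⟩

variable {A B}

theorem eventually_exists_isLadder [Finite ι] [Finite κ] (hA : ∀ γ, (A ∩ Ici fun _ ↦ γ).Nonempty)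
    (hB : ∀ γ, (B ∩ Ici fun _ ↦ γ).Nonempty) : ∀ᶠ δ in clubFilter W, ∀ n,
      ∃ a ∈ A ∩ Ici fun _ ↦ δ, ∃ b : ℕ → κ → W, (∀ m, b m ∈ B ∩ Ici fun _ ↦ δ) ∧
        C.IsLadder δ n a b := by
  filter_upwards [eventually_isSuccLimit, C.eventually_exists_isEndExtension_eq A B,
    C.eventually_exists_isEndExtension_gt A B] with δ hδ heq hgt n
  induction n with
  | zero =>
    obtain ⟨a, ha⟩ := hA δ
    obtain ⟨b, hb⟩ := hB δ
    obtain ⟨a', ha', b', hb', F, hF⟩ := hgt a ha b hb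
    exact ⟨a', ha', fun _ ↦ b', fun _ ↦ hb', hF.isLadder⟩
  | succ n ih =>
    obtain ⟨a, ha, b, hb, hladder⟩ := ih
    obtain ⟨a₁, ha₁, b₁, hb₁, F, hF, -⟩ := heq ⊥ hδ.bot_lt a ha (b n) (hb n)
    obtain ⟨a₂, ha₂, b₂, hb₂, G, hG⟩ := hgt a₁ ha₁ b₁ hb₁
    exact ⟨a₂, ha₂, _, Function.forall_update_iff b (p := fun _ b ↦ b ∈ B ∩ Ici fun _ ↦ δ) |>.2
      ⟨hb₂, fun m _ ↦ hb m⟩, hladder.update hF hG⟩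

theorem exists_forall_osc_eq_add [Finite ι] [Finite κ] (hA : ∀ γ, (A ∩ Ici fun _ ↦ γ).Nonempty)
    (hB : ∀ γ, (B ∩ Ici fun _ ↦ γ).Nonempty) (n : ℕ) :
    ∃ a ∈ A, ∃ b : ℕ → κ → W, (∀ m, b m ∈ B) ∧
      ∀ m ≤ n, ∀ i j, a i < b m j ∧ C.osc (a i) (b m j) = C.osc (a i) (b 0 j) + m := by
  obtain ⟨δ, hδ, hladder, hreflect⟩ := (eventually_isSuccLimit.and
    ((C.eventually_exists_isLadder hA hB).and (C.eventually_exists_agreeOn_mem_Ico A))).exists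
  obtain ⟨a, ha, b, hb, hab⟩ := hladder n
  obtain ⟨U, hbU, hU⟩ := exists_finset_lowerTrace_subset (C := C) hδ.bot_lt (b n)
  obtain ⟨γ, hγ, hUγ⟩ := exists_lt_forall_lt_of_finset hδ hU
  obtain ⟨γ', hγ', hw⟩ := exists_forall_weight_eq_of_finite (C := C) hδ
    (b := fun p : Fin (n + 1) × κ ↦ b p.1 p.2) fun p ↦ (hb p.1).2 p.2
  obtain ⟨η, hη, htrace⟩ := exists_forall_le_lowerTrace (C := C) (max_lt hγ hγ')
  obtain ⟨ζ, hζ, hηζ⟩ := hδ.lt_iff_exists_lt.1 hη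
  obtain ⟨a', ha', hmem, hagree⟩ := hreflect U hU ζ hζ a ha.1 ha.2
  have hpos (i) : ⊥ < a' i := (bot_le.trans_lt hηζ).trans_le (hmem i).1
  have hle (i) : ∀ x ∈ C.lowerTrace (a' i) δ, γ ⊔ γ' ≤ x :=
    htrace _ (hηζ.trans_le (hmem i).1) (hmem i).2
  refine ⟨a', ha', b, fun m ↦ (hb m).1, fun m hm i j ↦
    ⟨(hmem i).2.trans_le ((hb m).2 j), hab.osc_eq hbU hagree hpos (fun i ↦ (hmem i).2)
      (fun m ↦ (hb m).2) (fun x hx i y hy ↦ (hUγ x hx).trans_le (le_sup_left.trans (hle i y hy)))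
      (fun m hm i j x hx ↦ ?_) hm i j⟩⟩
  exact hw (⟨m, Nat.lt_succ_iff.2 hm⟩, j) x (le_sup_right.trans (hle i x hx))
    ((lt_of_mem_lowerTrace (hpos i) hx).trans (hmem i).2)

end CSequence

end Oscillation

section Kronecker

open MeasureTheory UnitAddTorus

variable {ι : Type*} {θ : UnitAddTorus ι}

section Fintype

variable [Fintype ι] {n : ι → ℤ}

theorem mFourier_apply_add (x y : UnitAddTorus ι) :
    mFourier n (x + y) = mFourier n x * mFourier n y := by
  simp only [mFourier, ContinuousMap.coe_mk, Pi.add_apply, fourier_apply, smul_add,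
    AddCircle.toCircle_add, Circle.coe_mul, Finset.prod_mul_distrib]

theorem mFourier_eq_toCircle_sum (x : UnitAddTorus ι) :
    mFourier n x = (∑ i, n i • x i).toCircle := by
  classical
  simp only [mFourier, ContinuousMap.coe_mk, fourier_apply]
  induction (Finset.univ : Finset ι) using Finset.induction_on with
  | empty => simp
  | insert i s hi ih =>
    rw [Finset.prod_insert hi, Finset.sum_insert hi, ih, AddCircle.toCircle_add, Circle.coe_mul]

theorem mFourier_ne_one (hθ : LinearIndependent ℤ θ) (hn : n ≠ 0) : mFourier n θ ≠ 1 := by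
  rw [mFourier_eq_toCircle_sum, ← Circle.coe_one, Ne, Circle.coe_inj, ← AddCircle.toCircle_zero,
    (AddCircle.injective_toCircle one_ne_zero).eq_iff]
  exact fun h ↦ hn (funext (Fintype.linearIndependent_iff.1 hθ n h))

theorem integral_mFourier_eq_zero {μ : Measure (UnitAddTorus ι)} (hμ : μ.map (· + θ) = μ)
    (hn : mFourier n θ ≠ 1) : ∫ x, mFourier n x ∂μ = 0 := by
  have h : (∫ x, mFourier n x ∂μ) * mFourier n θ = ∫ x, mFourier n x ∂μ := by
    rw [← integral_mul_const]
    simp_rw [← mFourier_apply_add]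
    conv_rhs => rw [← hμ]
    exact (integral_map_equiv (MeasurableEquiv.addRight θ) _).symm
  exact (mul_right_eq_self₀.1 h).resolve_left hn

end Fintype

variable [Finite ι]

theorem eq_of_map_add_right_eq {μ ν : Measure (UnitAddTorus ι)} [IsProbabilityMeasure μ]
    [IsProbabilityMeasure ν] (hθ : LinearIndependent ℤ θ) (hμ : μ.map (· + θ) = μ)
    (hν : ν.map (· + θ) = ν) : μ = ν := by
  have := Fintype.ofFinite ι
  let toC := BoundedContinuousFunction.toContinuousMapStarₐ ℂ (α := UnitAddTorus ι) (β := ℂ)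
  have hmap : ((mFourierSubalgebra ι).comap toC).map toC = mFourierSubalgebra ι :=
    StarSubalgebra.ext fun f ↦ ⟨fun ⟨_, hg, hgf⟩ ↦ hgf ▸ hg,
      fun hf ↦ ⟨BoundedContinuousFunction.mkOfCompact f, hf, rfl⟩⟩
  have hspan (f : C(UnitAddTorus ι, ℂ)) (hf : f ∈ Submodule.span ℂ (range mFourier)) :
      ∫ x, f x ∂μ = ∫ x, f x ∂ν := by
    have hint (f : C(UnitAddTorus ι, ℂ)) {μ : Measure (UnitAddTorus ι)} [IsFiniteMeasure μ] :
        Integrable f μ := f.continuous.integrable_of_hasCompactSupport (.of_compactSpace _)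
    induction hf using Submodule.span_induction with
    | mem _ h =>
      obtain ⟨n, rfl⟩ := h
      by_cases hn : n = 0
      · simp [hn, mFourier_zero]
      · rw [integral_mFourier_eq_zero hμ (mFourier_ne_one hθ hn),
          integral_mFourier_eq_zero hν (mFourier_ne_one hθ hn)]
    | zero => simp
    | add f g _ _ hf hg =>
      simp only [ContinuousMap.add_apply, integral_add (hint f) (hint g), hf, hg]
    | smul c f _ hf => simp only [ContinuousMap.smul_apply, integral_smul, hf]
  refine ext_of_forall_mem_subalgebra_integral_eq_of_polish (𝕜 := ℂ)
    (A := (mFourierSubalgebra ι).comap toC) ?_ fun g hg ↦ hspan (toC g) ?_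
  · exact hmap.symm ▸ mFourierSubalgebra_separatesPoints
  · rwa [← mFourierSubalgebra_coe]

-- Haar measure on the closure `H` of the multiples of `θ`, pushed forward to the torus, has to be
-- the Haar measure of the torus by unique ergodicity, so the open set `Hᶜ` is null, hence empty.
theorem denseRange_nsmul (hθ : LinearIndependent ℤ θ) : DenseRange fun n : ℕ ↦ n • θ := by
  have := Fintype.ofFinite ι
  let H := (AddSubgroup.zmultiples θ).topologicalClosure
  have hclosed : IsClosed (H : Set (UnitAddTorus ι)) := AddSubgroup.isClosed_topologicalClosure _
  have : CompactSpace H := isCompact_iff_compactSpace.1 hclosed.isCompact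
  let θ' : H := ⟨θ, AddSubgroup.le_topologicalClosure _ (AddSubgroup.mem_zmultiples θ)⟩
  let μ : Measure H := Measure.addHaarMeasure ⊤
  let ν : Measure (UnitAddTorus ι) := Measure.addHaarMeasure ⊤
  have : IsProbabilityMeasure μ := ⟨Measure.addHaarMeasure_self⟩
  have : IsProbabilityMeasure ν := ⟨Measure.addHaarMeasure_self⟩
  have hval : Measurable ((↑) : H → UnitAddTorus ι) := measurable_subtype_coe
  have : IsProbabilityMeasure (μ.map ((↑) : H → UnitAddTorus ι)) :=
    Measure.isProbabilityMeasure_map hval.aemeasurable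
  have hinv : (μ.map ((↑) : H → UnitAddTorus ι)).map (· + θ) = μ.map (↑) := by
    rw [Measure.map_map (measurable_add_const θ) hval]
    conv_rhs => rw [← map_add_right_eq_self μ θ', Measure.map_map hval (measurable_add_const _)]
    rfl
  have hnull : ν (H : Set (UnitAddTorus ι))ᶜ = 0 := by
    rw [← eq_of_map_add_right_eq hθ hinv (map_add_right_eq_self ν θ),
      Measure.map_apply hval hclosed.measurableSet.compl, preimage_compl,
      Subtype.coe_preimage_self, compl_univ, measure_empty]
  have huniv : closure (range fun n : ℤ ↦ n • θ) = Set.univ :=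
    compl_empty_iff.1 ((hclosed.isOpen_compl.measure_eq_zero_iff ν).1 hnull)
  exact denseRange_zsmul_iff_nsmul.1 (dense_iff_closure_eq.2 huniv)

theorem exists_forall_exists_add_nsmul_mem {G : Type*} [AddCommGroup G] [TopologicalSpace G]
    [IsTopologicalAddGroup G] [CompactSpace G] {θ : G} (hθ : DenseRange fun n : ℕ ↦ n • θ)
    {O : Set G} (hO : IsOpen O) (hO' : O.Nonempty) :
    ∃ N : ℕ, ∀ x, ∃ m ≤ N, x + m • θ ∈ O := by
  have hcover : ∀ x, ∃ m : ℕ, x + m • θ ∈ O := fun x ↦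
    hθ.exists_mem_open (hO.preimage (continuous_const_add x)) (by
      obtain ⟨y, hy⟩ := hO'
      exact ⟨-x + y, by simpa using hy⟩)
  obtain ⟨s, hs⟩ := isCompact_univ.elim_finite_subcover (fun m : ℕ ↦ (fun x ↦ x + m • θ) ⁻¹' O)
    (fun m ↦ hO.preimage (continuous_add_const _))
    fun x _ ↦ mem_iUnion.2 (hcover x)
  refine ⟨s.sup id, fun x ↦ ?_⟩
  obtain ⟨m, hm, hx⟩ := mem_iUnion₂.1 (hs (mem_univ x))
  exact ⟨m, Finset.le_sup (f := id) hm, hx⟩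

theorem exists_linearIndependent_unitAddCircle {W : Type*} (hW : #W ≤ 𝔠) :
    ∃ θ : W → UnitAddCircle, LinearIndependent ℤ θ := by
  classical
  let basis := Module.Basis.ofVectorSpace ℚ ℝ
  have hle : lift.{0} #(Option W) ≤ lift #(Module.Basis.ofVectorSpaceIndex ℚ ℝ) := by
    rw [basis.mk_eq_rank'', Real.rank_rat_real, mk_option, lift_continuum, lift_uzero]
    exact add_le_of_le aleph0_le_continuum hW (one_le_aleph0.trans aleph0_le_continuum)
  obtain ⟨f⟩ := lift_mk_le'.1 hle
  have hv : LinearIndependent ℚ (basis ∘ f) := basis.linearIndependent.comp f f.injective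
  have hv0 : basis (f none) ≠ 0 := hv.ne_zero none
  let u : Option W → ℝ := fun o ↦ basis (f o) / basis (f none)
  have hu : LinearIndependent ℤ u :=
    (hv.map' (LinearMap.mulRight ℚ (basis (f none))⁻¹) (LinearMap.ker_eq_bot.2
      (mul_left_injective₀ (inv_ne_zero hv0)))).restrict_scalars' ℤ
  let toCircle : ℝ →ₗ[ℤ] UnitAddCircle := (QuotientAddGroup.mk' _).toIntLinearMap
  have hker : LinearMap.ker toCircle = Submodule.span ℤ (u '' {none}) := by
    ext x
    rw [image_singleton, show u none = 1 from div_self hv0, Submodule.mem_span_singleton]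
    exact AddCircle.coe_eq_zero_iff 1
  refine ⟨toCircle ∘ u ∘ some, (hu.comp some (Option.some_injective W)).map ?_⟩
  rw [hker, range_comp]
  exact hu.disjoint_span_image (by simp)

/-- A sequence of two-valued functions such that, over every finite set of indices, every pattern
of values is realized by a common shift of bounded length, whatever the starting points are. -/
def ShiftIndependent {W : Type*} (g : W → ℕ → Bool) : Prop :=
  ∀ (a : Finset W) (t : W → Bool), ∃ n, ∀ s : W → ℕ, ∃ m ≤ n, ∀ x ∈ a, g x (s x + m) = t x

theorem exists_shiftIndependent {W : Type*} (hW : #W ≤ 𝔠) :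
    ∃ g : W → ℕ → Bool, ShiftIndependent g := by
  classical
  obtain ⟨θ, hθ⟩ := exists_linearIndependent_unitAddCircle hW
  have hhalf : ((1 / 2 : ℝ) : UnitAddCircle) ≠ 0 := by
    rw [Ne, AddCircle.coe_eq_zero_iff_of_mem_Ico (by norm_num)]
    norm_num
  obtain ⟨U, V, hU, hV, hhalfU, hzeroV, hUV⟩ := t2_separation hhalf
  refine ⟨fun w k ↦ decide (k • θ w ∈ U), fun a t ↦ ?_⟩
  let target (c : Bool) : Set UnitAddCircle := if c then U else V
  have htarget : ∀ c, IsOpen (target c) ∧ (target c).Nonempty := by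
    rintro (_ | _)
    exacts [⟨hV, _, hzeroV⟩, ⟨hU, _, hhalfU⟩]
  have hdecide : ∀ c, ∀ z ∈ target c, decide (z ∈ U) = c := by
    rintro (_ | _) z hz
    exacts [decide_eq_false (hUV.notMem_of_mem_right hz), decide_eq_true hz]
  have hdense := denseRange_nsmul (θ := fun w : a ↦ θ w) (hθ.comp _ Subtype.val_injective)
  obtain ⟨n, hn⟩ := exists_forall_exists_add_nsmul_mem hdense
    (isOpen_set_pi finite_univ fun w _ ↦ (htarget (t w)).1)
    (univ_pi_nonempty_iff.2 fun w ↦ (htarget (t w)).2)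
  refine ⟨n, fun s ↦ ?_⟩
  obtain ⟨m, hm, hmem⟩ := hn fun w ↦ s w • θ w
  refine ⟨m, hm, fun w hw ↦ hdecide _ _ ?_⟩
  simpa [add_nsmul] using hmem ⟨w, hw⟩ (mem_univ _)

end Kronecker

section Coloring

variable {W : Type*} [ConditionallyCompleteLinearOrderBot W] [WellFoundedLT W]

namespace CSequence

variable {C : CSequence W} {g : W → ℕ → Bool}

variable (C g) in
/-- The function `α ↦ g α (osc α β)` cut off at `β`; the spaces of the theorem consist of the
restrictions of these functions to a subset of `W`. -/
noncomputable def coloring (β α : W) : Bool := if α < β then g α (C.osc α β) else false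

theorem coloring_of_lt {α β : W} (h : α < β) : C.coloring g β α = g α (C.osc α β) := if_pos h

theorem coloring_of_le {α β : W} (h : β ≤ α) : C.coloring g β α = false := if_neg h.not_gt

end CSequence

variable [CountableIio W] [Uncountable W]

theorem exists_root {I : Type*} (F : I → Finset W) {h : I → W} (hh : ∀ γ, ∃ i, γ ≤ h i) :
    ∃ r : Finset W, ∀ γ, ∃ i, γ ≤ h i ∧ ∀ ξ ∈ F i, ξ ∉ r → γ ≤ ξ := by
  classical
  by_contra! hbad
  choose G hG using hbad
  obtain ⟨δ, hδ⟩ := (eventually_reflects (T := fun _ ↦ Unit) fun r _ v ↦ G r < v).exists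
  obtain ⟨i, hi⟩ := hh δ
  obtain ⟨v, hvδ, hv⟩ := hδ {ξ ∈ F i | ξ < δ} (by simp) () (exists_gt _)
  obtain ⟨ξ, hξ, hξr, hlt⟩ := hG _ i ((hv.trans hvδ).le.trans hi)
  exact hξr (Finset.mem_filter.2 ⟨hξ, hlt.trans (hv.trans hvδ)⟩)

namespace CSequence

variable (C : CSequence W) {g : W → ℕ → Bool} {I J T κ : Type*}

theorem exists_forall_coloring_eq (hg : ShiftIndependent g) [Finite κ] {a : I → Finset W}
    {b : J → κ → W} (ha : ∀ γ, ∃ i, ∀ ξ ∈ a i, γ ≤ ξ) (hb : ∀ γ, ∃ j, ∀ k, γ ≤ b j k)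
    (target : I → W → Bool) (choice : I → W → κ) :
    ∃ i j, (∀ ξ ∈ a i, ∀ k, ξ < b j k) ∧
      ∀ ξ ∈ a i, C.coloring g (b j (choice i ξ)) ξ = target i ξ := by
  choose n hn using fun i ↦ hg (a i) (target i)
  obtain ⟨⟨k, N⟩, hkN⟩ := exists_forall_exists_eq (fun i ↦ ((a i).card, n i))
    (R := fun γ i ↦ ∀ ξ ∈ a i, γ ≤ ξ) (fun i _ _ hle h ξ hξ ↦ hle.trans (h ξ hξ)) ha
  let A : Set (Fin k → W) := {f | ∃ i, n i = N ∧ range f = a i}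
  have hA : ∀ γ, (A ∩ Ici fun _ ↦ γ).Nonempty := fun γ ↦ by
    obtain ⟨i, hi, hγ⟩ := hkN γ
    obtain ⟨hcard, hN⟩ := Prod.mk.inj hi
    exact ⟨(a i).orderEmbOfFin hcard, ⟨i, hN, by simp⟩,
      fun l ↦ hγ _ (Finset.orderEmbOfFin_mem _ hcard l)⟩
  have hB : ∀ γ, (range b ∩ Ici fun _ ↦ γ).Nonempty := fun γ ↦ by
    obtain ⟨j, hj⟩ := hb γ
    exact ⟨b j, ⟨j, rfl⟩, hj⟩
  obtain ⟨f, ⟨i, rfl, hf⟩, b', hb', hosc⟩ := C.exists_forall_osc_eq_add hA hB N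
  obtain ⟨m, hm, htarget⟩ := hn i fun ξ ↦ C.osc ξ (b' 0 (choice i ξ))
  obtain ⟨j, hj⟩ := hb' m
  have hshift : ∀ ξ ∈ a i, ∀ k, ξ < b j k ∧ C.osc ξ (b j k) = C.osc ξ (b' 0 k) + m := by
    intro ξ hξ k
    obtain ⟨l, rfl⟩ : ξ ∈ range f := hf ▸ hξ
    exact hj ▸ hosc m hm l k
  refine ⟨i, j, fun ξ hξ k ↦ (hshift ξ hξ k).1, fun ξ hξ ↦ ?_⟩
  rw [coloring_of_lt (hshift ξ hξ _).1, (hshift ξ hξ _).2, htarget ξ hξ]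

theorem countable_setOf_eqOn_coloring (hg : ShiftIndependent g) {D : Set W} (hD : ¬ D.Countable)
    (β₀ : W) : {β | EqOn (C.coloring g β) (C.coloring g β₀) D}.Countable := by
  by_contra hS
  obtain ⟨α, β, -, htrue⟩ := C.exists_forall_coloring_eq hg (I := ↥(D ∩ Ici β₀))
    (J := {β | EqOn (C.coloring g β) (C.coloring g β₀) D}) (κ := Unit)
    (a := fun α ↦ {↑α}) (b := fun β _ ↦ β)
    (fun γ ↦ by
      obtain ⟨α, hα, hle⟩ := exists_ge_of_not_countable hD (max γ β₀)
      exact ⟨⟨α, hα, (le_max_right γ β₀).trans hle⟩, by simpa using (le_max_left γ β₀).trans hle⟩)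
    (fun γ ↦ by
      obtain ⟨β, hβ, hle⟩ := exists_ge_of_not_countable hS γ
      exact ⟨⟨β, hβ⟩, fun _ ↦ hle⟩)
    (fun _ _ ↦ true) (fun _ _ ↦ ())
  have hfalse : C.coloring g β α = false := (β.2 α.2.1).trans (coloring_of_le α.2.2)
  exact Bool.false_ne_true (hfalse.symm.trans (htrue α (Finset.mem_singleton_self _)))

theorem exists_forall_not_countable_eqOn_coloring (hg : ShiftIndependent g) [Uncountable T]
    {β : T → W} (hβ : Function.Injective β) : ∃ y₀, ∀ F : Finset W,
      ¬ {y | EqOn (C.coloring g (β y)) (C.coloring g (β y₀)) F}.Countable := by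
  classical
  by_contra! hbad
  choose F hF using hbad
  have hbdd : ∀ y, ∃ ζ, ∀ y', EqOn (C.coloring g (β y')) (C.coloring g (β y)) (F y) → β y' < ζ :=
    fun y ↦ (exists_forall_lt_of_countable ((hF y).image β)).imp fun _ h y' hy' ↦ h _ ⟨y', hy', rfl⟩
  choose ζ hζ using hbdd
  obtain ⟨r, hr⟩ := exists_root F fun γ ↦
    (exists_mem_forall_ge (b := fun y (_ : Unit) ↦ β y) (fun _ ↦ hβ) not_countable_univ γ).imp
      fun _ h ↦ h.2 ()
  obtain ⟨q, hq⟩ := exists_forall_exists_eq (fun y (α : r) ↦ C.coloring g (β y) α)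
    (R := fun γ y ↦ γ ≤ β y ∧ ∀ ξ ∈ F y, ξ ∉ r → γ ≤ ξ) (fun y _ _ hle h ↦
      ⟨hle.trans h.1, fun ξ hξ hξr ↦ hle.trans (h.2 ξ hξ hξr)⟩) hr
  let J := {y // (fun α : r ↦ C.coloring g (β y) α) = q}
  obtain ⟨y, y', hlt, heq⟩ := C.exists_forall_coloring_eq hg (I := J) (J := J) (κ := Unit)
    (a := fun y ↦ insert (ζ y) (F y \ r)) (b := fun y _ ↦ β y)
    (fun γ ↦ by
      obtain ⟨y, hy, hγ, hle⟩ := hq γ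
      refine ⟨⟨y, hy⟩, Finset.forall_mem_insert _ _ _ |>.2
        ⟨hγ.trans (hζ y y (eqOn_refl _ _)).le, fun ξ hξ ↦ ?_⟩⟩
      exact hle ξ (Finset.mem_sdiff.1 hξ).1 (Finset.mem_sdiff.1 hξ).2)
    (fun γ ↦ by
      obtain ⟨y, hy, hγ, -⟩ := hq γ
      exact ⟨⟨y, hy⟩, fun _ ↦ hγ⟩)
    (fun y ξ ↦ C.coloring g (β y) ξ) (fun _ _ ↦ ())
  refine (hlt _ (Finset.mem_insert_self _ _) ()).not_gt (hζ y y' fun ξ hξ ↦ ?_)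
  by_cases hξr : ξ ∈ r
  · exact congrFun (y'.2.trans y.2.symm) ⟨ξ, hξr⟩
  · exact heq ξ (Finset.mem_insert_of_mem (Finset.mem_sdiff.2 ⟨hξ, hξr⟩))

theorem exists_forall_exists_coloring_ne (hg : ShiftIndependent g) [Uncountable T]
    {β γ : T → W} (hβ : Function.Injective β) (hγ : Function.Injective γ) {A D : Set W}
    (hD : ¬ D.Countable) (hAD : Disjoint A D) : ∃ y₀, ∃ α ∈ D, ∀ F : Finset W, ↑F ⊆ A →
      ∃ y, EqOn (C.coloring g (β y)) (C.coloring g (β y₀)) F ∧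
        C.coloring g (γ y) α ≠ C.coloring g (γ y₀) α := by
  classical
  obtain ⟨y₀, hy₀⟩ := C.exists_forall_not_countable_eqOn_coloring hg hβ
  by_contra! hbad
  choose F hFA hF using fun α : D ↦ hbad y₀ α α.2
  obtain ⟨r, hr⟩ := exists_root F (h := fun α : D ↦ α.1) fun ζ ↦ by
    simpa using exists_ge_of_not_countable hD ζ
  let ζ₀ := max (β y₀) (γ y₀)
  obtain ⟨α, y, -, heq⟩ := C.exists_forall_coloring_eq hg
    (I := {α : D // ζ₀ ≤ α ∧ ∀ ξ ∈ F α, ξ ∉ r → ζ₀ ≤ ξ})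
    (J := {y | EqOn (C.coloring g (β y)) (C.coloring g (β y₀)) r})
    (a := fun α ↦ insert ↑α.1 (F α.1 \ r)) (b := fun y c ↦ bif c then γ y else β y)
    (fun ζ ↦ by
      obtain ⟨α, hα, hle⟩ := hr (max ζ ζ₀)
      refine ⟨⟨α, (le_max_right _ _).trans hα, fun ξ hξ hξr ↦
        (le_max_right _ _).trans (hle ξ hξ hξr)⟩, Finset.forall_mem_insert _ _ _ |>.2
          ⟨(le_max_left _ _).trans hα, fun ξ hξ ↦ (le_max_left ζ ζ₀).trans ?_⟩⟩
      exact hle ξ (Finset.mem_sdiff.1 hξ).1 (Finset.mem_sdiff.1 hξ).2)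
    (fun ζ ↦ by
      obtain ⟨y, hy, hle⟩ := exists_mem_forall_ge (b := fun y c ↦ bif c then γ y else β y)
        (Bool.forall_bool.2 ⟨hβ, hγ⟩) (hy₀ r) ζ
      exact ⟨⟨y, hy⟩, hle⟩)
    (fun α ξ ↦ decide (ξ = α.1)) (fun α ξ ↦ decide (ξ = α.1))
  have htrue : C.coloring g (γ y) α.1 = true := by
    simpa using heq _ (Finset.mem_insert_self _ _)
  have hfalse : C.coloring g (γ y) α.1 = false := by
    refine (hF α.1 y fun ξ hξ ↦ ?_).trans (coloring_of_le ((le_max_right _ _).trans α.2.1))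
    by_cases hξr : ξ ∈ r
    · exact y.2 hξr
    have hξα : ξ ≠ α.1 := fun h ↦ hAD.notMem_of_mem_left (hFA _ hξ) (h ▸ α.1.2)
    rw [coloring_of_le ((le_max_left _ _).trans (α.2.2 ξ hξ hξr))]
    simpa [hξα] using heq ξ (Finset.mem_insert_of_mem (Finset.mem_sdiff.2 ⟨hξ, hξr⟩))
  exact Bool.false_ne_true (hfalse.symm.trans htrue)

end CSequence

end Coloring

section AlmostDisjoint

theorem exists_pairwise_countable_eq {W : Type*} [ConditionallyCompleteLinearOrderBot W]
    [CountableIio W] [Uncountable W] :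
    ∃ P : Set (W → W), P.Pairwise (fun f f' ↦ {α | f α = f' α}.Countable) ∧ #W < #P := by
  obtain ⟨P, hP⟩ := zorn_subset {P : Set (W → W) | P.Pairwise fun f f' ↦ {α | f α = f' α}.Countable}
    fun c hc hchain ↦ ⟨⋃₀ c, (pairwise_sUnion hchain.directedOn).2 fun _ hs ↦ hc hs,
      fun _ ↦ subset_sUnion_of_mem⟩
  refine ⟨P, hP.prop, not_le.1 fun hle ↦ ?_⟩
  obtain ⟨e⟩ := hle
  have hcountable (α : W) : {f : P | e f ≤ α}.Countable := by
    refine (((CountableIio.countable_Iio α).insert α).preimage e.injective).mono fun f hf ↦ ?_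
    exact (mem_ofPred.1 hf).eq_or_lt
  choose d hd using fun α ↦
    exists_forall_lt_of_countable ((hcountable α).image fun f ↦ f.1 α)
  have hne (f : P) {α : W} (h : e f ≤ α) : f.1 α ≠ d α := (hd α _ ⟨f, h, rfl⟩).ne
  have hdP : d ∉ P := fun h ↦ hne ⟨d, h⟩ le_rfl rfl
  have hdf : ∀ f ∈ P, {α | f α = d α}.Countable := fun f hf ↦
    (CountableIio.countable_Iio (e ⟨f, hf⟩)).mono fun α hα ↦ not_le.1 fun h ↦ hne ⟨f, hf⟩ h hα
  exact hdP (hP.le_of_ge (hP.prop.insert fun f hf _ ↦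
    ⟨by simpa only [eq_comm] using hdf f hf, hdf f hf⟩) (subset_insert d P) (mem_insert d P))

theorem exists_pairwise_countable_inter {W : Type u} [ConditionallyCompleteLinearOrderBot W]
    [CountableIio W] [Uncountable W] : ∃ (I : Type u) (A : I → Set W), #W < #I ∧
      (∀ i, ¬ (A i).Countable) ∧ Pairwise fun i j ↦ (A i ∩ A j).Countable := by
  obtain ⟨P, hP, hcard⟩ := exists_pairwise_countable_eq (W := W)
  obtain ⟨e⟩ : Nonempty (W × W ≃ W) := Cardinal.eq.1 (mul_eq_self (aleph0_le_mk W))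
  refine ⟨P, fun f ↦ range fun α ↦ e (α, f.1 α), hcard, fun f hf ↦ ?_, fun f f' hne ↦ ?_⟩
  · have hinj : Function.Injective fun α ↦ e (α, f.1 α) := fun _ _ h ↦
      congrArg Prod.fst (e.injective h)
    exact not_countable_univ (preimage_range _ ▸ hf.preimage hinj)
  · refine ((hP f.2 f'.2 (Subtype.coe_ne_coe.2 hne)).image fun α ↦ e (α, f.1 α)).mono ?_
    rintro _ ⟨⟨α, rfl⟩, α', h⟩
    obtain ⟨rfl, heq⟩ := Prod.mk.inj (e.injective h)
    exact ⟨α', heq.symm, rfl⟩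

end AlmostDisjoint

section Spaces

open Topology

theorem exists_finset_forall_eq_of_isInducing {X ι Z : Type*} {Y : ι → Type*} [TopologicalSpace X]
    [∀ i, TopologicalSpace (Y i)] [TopologicalSpace Z] [DiscreteTopology Z] {e : X → ∀ i, Y i}
    (he : IsInducing e) {f : X → Z} (hf : Continuous f) (x₀ : X) :
    ∃ F : Finset ι, ∀ x, (∀ i ∈ F, e x i = e x₀ i) → f x = f x₀ := by
  have hmem : f ⁻¹' {f x₀} ∈ 𝓝 x₀ := hf.continuousAt ((isOpen_discrete {f x₀}).mem_nhds rfl)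
  rw [he.nhds_eq_comap, nhds_pi] at hmem
  obtain ⟨U, hU, hUf⟩ := hmem
  obtain ⟨F, hF, t, ht, hFU⟩ := Filter.mem_pi.1 hU
  refine ⟨hF.toFinset, fun x hx ↦ hUf (hFU fun i hi ↦ ?_)⟩
  exact hx i (hF.mem_toFinset.2 hi) ▸ mem_of_mem_nhds (ht i)

namespace CSequence

variable {W : Type*} [ConditionallyCompleteLinearOrderBot W] [WellFoundedLT W]

/-- Moore's space associated with `A`: the points of the Cantor cube `A → Bool` cut out by the
colouring. -/
def coloringSpace (C : CSequence W) (g : W → ℕ → Bool) (A : Set W) : Set (A → Bool) :=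
  range fun β (α : A) ↦ C.coloring g β α

variable [CountableIio W] [Uncountable W] (C : CSequence W) {g : W → ℕ → Bool} {A B : Set W}

theorem not_countable_coloringSpace (hg : ShiftIndependent g) (hA : ¬ A.Countable) :
    ¬ (C.coloringSpace g A).Countable := by
  intro h
  have hfiber : ∀ y ∈ C.coloringSpace g A,
      {β | (fun α : A ↦ C.coloring g β α) = y}.Countable := by
    rintro _ ⟨β₀, rfl⟩
    exact (C.countable_setOf_eqOn_coloring hg hA β₀).mono fun β hβ α hα ↦ congrFun hβ ⟨α, hα⟩
  exact not_countable_univ ((h.biUnion hfiber).mono fun β _ ↦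
    mem_iUnion₂.2 ⟨_, mem_range_self β, rfl⟩)

theorem mk_coloringSpace (hg : ShiftIndependent g) (hA : ¬ A.Countable) (hW : #W = ℵ₁) :
    #(C.coloringSpace g A) = ℵ₁ := by
  refine le_antisymm (hW ▸ mk_range_le) (aleph_one_le_iff.2 (not_le.1 fun h ↦ ?_))
  exact C.not_countable_coloringSpace hg hA (le_aleph0_iff_set_countable.1 h)

theorem isEmpty_homeomorph_of_countable_inter (hg : ShiftIndependent g) (hB : ¬ B.Countable)
    (hAB : (A ∩ B).Countable) {S : Set (C.coloringSpace g A)} (hS : ¬ S.Countable)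
    (S' : Set (C.coloringSpace g B)) : IsEmpty (S ≃ₜ S') := by
  refine ⟨fun h ↦ ?_⟩
  have : Uncountable S := by rwa [← not_countable_iff, countable_coe_iff]
  choose β hβ using fun y : S ↦ y.1.2
  choose γ hγ using fun y : S' ↦ y.1.2
  have hβinj : Function.Injective β := fun y y' heq ↦
    Subtype.ext (Subtype.ext (by rw [← hβ, ← hβ, heq]))
  have hγinj : Function.Injective γ := fun y y' heq ↦
    Subtype.ext (Subtype.ext (by rw [← hγ, ← hγ, heq]))
  have hD : ¬ (B \ A).Countable := fun hD ↦ hB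
    (sdiff_union_inter B A ▸ hD.union (inter_comm A B ▸ hAB))
  obtain ⟨y₀, α, hα, hne⟩ := C.exists_forall_exists_coloring_ne hg hβinj
    (hγinj.comp h.injective) hD disjoint_sdiff_right
  have hcont : Continuous fun y ↦ (h y).1.1 ⟨α, hα.1⟩ := (continuous_apply _).comp
    (continuous_subtype_val.comp (continuous_subtype_val.comp h.continuous))
  obtain ⟨F, hF⟩ := exists_finset_forall_eq_of_isInducing
    (IsInducing.subtypeVal.comp IsInducing.subtypeVal) hcont y₀
  obtain ⟨y, heq, hy⟩ := hne (F.map (.subtype _)) (by simp)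
  refine hy ((congrFun (hγ (h y)) ⟨α, hα.1⟩).trans ((hF y fun x hx ↦ ?_).trans
    (congrFun (hγ (h y₀)) ⟨α, hα.1⟩).symm))
  exact (congrFun (hβ y) x).symm.trans ((heq (Finset.mem_map_of_mem _ hx)).trans
    (congrFun (hβ y₀) x))

end CSequence

end Spaces

theorem exists_countableIio_mk_eq_aleph_one : ∃ (W : Type u)
    (_ : ConditionallyCompleteLinearOrderBot W), WellFoundedLT W ∧ CountableIio W ∧ #W = ℵ₁ := by
  have : Nonempty (ℵ₁ : Cardinal.{u}).ord.ToType :=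
    nonempty_ord_toType (aleph_pos 1).ne'
  let := WellFoundedLT.toOrderBot (ℵ₁ : Cardinal.{u}).ord.ToType
  refine ⟨(ℵ₁ : Cardinal.{u}).ord.ToType, WellFoundedLT.conditionallyCompleteLinearOrderBot _,
    inferInstance, ⟨fun w ↦ ?_⟩, mk_ord_toType _⟩
  exact le_aleph0_iff_set_countable.1 (lt_aleph_one_iff.1
    ((mk_Iio_lt w (by simp)).trans_eq (mk_ord_toType _)))

end Moore

open Set Moore in
theorem statement3_general (B : Set (Σ Y : Type u, TopologicalSpace Y))
    (hbasis : ∀ (ι : Type) (X : Set (ι → Bool)), Cardinal.mk X = Cardinal.aleph 1 →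
      ∃ S : Set X, ¬ S.Countable ∧ ∃ b ∈ B, Nonempty (@Homeomorph S b.1 _ b.2)) :
    Cardinal.aleph 2 ≤ Cardinal.mk B := by
  obtain ⟨W, _, _, _, hW⟩ := exists_countableIio_mk_eq_aleph_one.{0}
  have : Uncountable W := by
    rw [← Cardinal.aleph0_lt_mk_iff, hW, ← Cardinal.aleph_one_le_iff]
  obtain ⟨C⟩ : Nonempty (CSequence W) := inferInstance
  obtain ⟨g, hg⟩ := exists_shiftIndependent (hW.trans_le Cardinal.aleph_one_le_continuum)
  obtain ⟨I, A, hI, hA, hAA⟩ := exists_pairwise_countable_inter (W := W)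
  choose S hS b hb hom using fun i ↦
    hbasis (A i) (C.coloringSpace g (A i)) (C.mk_coloringSpace hg (hA i) hW)
  have hinj : Function.Injective fun i ↦ (⟨b i, hb i⟩ : B) := by
    intro i j hij
    by_contra hne
    obtain ⟨e⟩ := hom i
    obtain ⟨e'⟩ := (Subtype.mk.inj hij : b i = b j) ▸ hom j
    let := (b i).2
    exact (C.isEmpty_homeomorph_of_countable_inter hg (hA j) (hAA hne) (hS i) (S j)).false
      (e.trans e'.symm)
  have hI₂ : Cardinal.aleph 2 ≤ Cardinal.mk I := by
    rw [← one_add_one_eq_two, ← Cardinal.succ_aleph, ← hW]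
    exact Order.succ_le_of_lt hI
  simpa using (Cardinal.lift_le.2 hI₂).trans (Cardinal.lift_mk_le_lift_mk_of_injective hinj)

/-- **Theorem (Moore).** If `ℬ` is a family of topological spaces such that every
uncountable regular Hausdorff topological space of cardinality `ℵ₁` has an
uncountable subspace homeomorphic to a member of `ℬ`, then `ℬ` has cardinality at
least `ℵ₂`.  In particular, any basis (with respect to taking uncountable
subspaces) for the uncountable regular Hausdorff spaces has cardinality strictly
greater than `ℵ₁`. -/
theorem statement3 (B : Set (Σ Y : Type, TopologicalSpace Y))
    (hbasis : ∀ (Y : Type) (tY : TopologicalSpace Y),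
      @T2Space Y tY → @RegularSpace Y tY → Cardinal.mk Y = Cardinal.aleph 1 →
      ∃ S : Set Y, ¬ S.Countable ∧ ∃ b ∈ B,
        Nonempty (@Homeomorph S b.1 (TopologicalSpace.induced Subtype.val tY) b.2)) :
    Cardinal.aleph 2 ≤ Cardinal.mk B :=
  statement3_general B fun _ X hX ↦ hbasis X inferInstance inferInstance inferInstance hX
end

section
/- Let ⟨C_α : α < ω₁⟩ be a C-sequence with associated lower trace L and maximal weight functions e_β(·) = ρ₁(·,β), and for α < β set osc(α,β) = |Osc(e_α, e_β; L(α,β))|. Then for all uncountable A, B ⊆ ω₁ and every n < ω there exist α ∈ A and β ∈ B with α < β and *(osc(α,β)) = n. In particular osc* witnesses ω₁ ↛ [ω₁;ω₁]²_ω. -/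
/-- The first uncountable ordinal. -/
noncomputable def omega1 : Ordinal := (Cardinal.aleph 1).ord

/-- `OscSet s t F` is the set of all `ξ ∈ F` which have an immediate predecessor
`ξ⁻` in `F` with `s ξ⁻ ≤ t ξ⁻` and `s ξ > t ξ`. -/
def OscSet (s t : Ordinal → ℕ) (F : Set Ordinal) : Set Ordinal :=
  {ξ | ξ ∈ F ∧ ∃ η ∈ F, η < ξ ∧ (∀ ζ ∈ F, ζ < ξ → ζ ≤ η) ∧ s η ≤ t η ∧ t ξ < s ξ}

/-- The function `* : ω → ω`: `*(0) = 0` and, for `m > 0`, `*(m) = n` where the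
`n`-th prime (with `p₀ = 2`, `p₁ = 3`, …) is the least prime not dividing `m`. -/
noncomputable def starFn (m : ℕ) : ℕ :=
  if m = 0 then 0 else Nat.count Nat.Prime (sInf {p | Nat.Prime p ∧ ¬ p ∣ m})

/-!
Fix a limit `δ < ω₁` with the closure properties of `M ∩ ω₁`, for a countable elementary submodel
`M`, and let `a ∈ A` and `b ∈ B` lie above `δ`. Since `e_a` and `e_b` differ only finitely often
below `δ`, reflection yields `a'` and `b'` above `δ`, looking like `a` and `b` on `L(δ, b)`, such
that `L(δ, b')` end-extends `L(δ, b)` by a block on which `e_{a'} ≤ e_{b'}`. Since the functions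
`e_a` are finite-to-one, one can also make `e_{a'} > e_{b'}` on such a block. A block of the first
kind followed by one of the second raises the oscillation by exactly one, so that for every `N`
some `a` oscillates `k, k + 1, …, k + N` times with suitable `b₀, …, b_N`. Now reflect `a` to some
`α ∈ A` just below `δ`. As `e_{b_m}` agrees with `e_δ` near `δ` and
`L(α, b_m) = L(δ, b_m) ∪ L(α, δ)`, this adds the constant `|Osc(e_α, e_δ; L(α, δ))|` to all these
numbers. Finally, `*` takes the value `n` on every sufficiently long interval.
-/

open Filter Order Set Topology

theorem starFn_eq_of_prime_dvd_iff {n m : ℕ}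
    (h : ∀ p ≤ Nat.nth Nat.Prime n, p.Prime → (p ∣ m ↔ p < Nat.nth Nat.Prime n)) :
    starFn m = n := by
  have hq : (Nat.nth Nat.Prime n).Prime := Nat.prime_nth_prime n
  have hqm : ¬ Nat.nth Nat.Prime n ∣ m := by simp [h _ le_rfl hq]
  have hleast : IsLeast {p | p.Prime ∧ ¬ p ∣ m} (Nat.nth Nat.Prime n) :=
    ⟨⟨hq, hqm⟩, fun p ⟨hp, hpm⟩ => by
      by_contra! hlt
      exact hpm ((h p hlt.le hp).2 hlt)⟩
  have hm : m ≠ 0 := by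
    rintro rfl
    exact hqm (dvd_zero _)
  rw [starFn, if_neg hm, hleast.csInf_eq, Nat.count_nth_of_infinite Nat.infinite_setOfPred_prime]

theorem exists_forall_exists_starFn_add_eq (n : ℕ) :
    ∃ N, ∀ k, ∃ m ≤ N, starFn (k + m) = n := by
  set q := Nat.nth Nat.Prime n
  have hq0 : 0 < q := (Nat.prime_nth_prime n).pos
  -- It suffices that `k + m ≡ (q - 1)! [MOD q!]`: the primes up to `q` dividing `(q - 1)!` are
  -- those below `q`.
  refine ⟨q.factorial, fun k => ?_⟩
  have : NeZero q.factorial := ⟨q.factorial_ne_zero⟩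
  set m := ((q - 1).factorial - k : ZMod q.factorial).val
  refine ⟨m, (ZMod.val_lt _).le, starFn_eq_of_prime_dvd_iff fun p hpq hp => ?_⟩
  have hmod : k + m ≡ (q - 1).factorial [MOD q.factorial] := by
    rw [← ZMod.natCast_eq_natCast_iff]
    simp [m]
  rw [hmod.dvd_iff (Nat.dvd_factorial hp.pos hpq), hp.dvd_factorial]
  omega

theorem omega1_pos : 0 < omega1 := Cardinal.ord_pos.2 (Cardinal.aleph_pos 1)

theorem countable_Iio_of_lt_omega1 {γ : Ordinal} (hγ : γ < omega1) : (Iio γ).Countable := by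
  rw [← Cardinal.le_aleph0_iff_set_countable, Cardinal.mk_Iio_ordinal, Cardinal.lift_le_aleph0,
    ← lt_succ_iff, Cardinal.succ_aleph0]
  exact Cardinal.lt_ord.1 hγ

theorem succ_lt_omega1 {γ : Ordinal} (hγ : γ < omega1) : succ γ < omega1 :=
  (Cardinal.isSuccLimit_ord (Cardinal.aleph0_le_aleph 1)).succ_lt hγ

theorem iSup_lt_omega1 {ι : Type*} [Countable ι] {f : ι → Ordinal} (hf : ∀ i, f i < omega1) :
    ⨆ i, f i < omega1 := by
  simp only [omega1, Cardinal.ord_aleph] at hf ⊢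
  exact Ordinal.iSup_lt_omega_one hf

theorem hasBasis_nhdsLT_omega1 : (𝓝[<] omega1).HasBasis (· < omega1) (Ioo · omega1) :=
  nhdsLT_basis_of_exists_lt ⟨0, omega1_pos⟩

instance countableInterFilter_nhdsLT_omega1 : CountableInterFilter (𝓝[<] omega1) := by
  refine ⟨fun S hS h => ?_⟩
  have : Countable S := hS
  choose γ hγ hγS using fun s : S => hasBasis_nhdsLT_omega1.mem_iff.1 (h s s.2)
  exact hasBasis_nhdsLT_omega1.mem_iff.2 ⟨⨆ s, γ s, iSup_lt_omega1 hγ, fun x hx s hs =>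
    have hγx := (le_ciSup Ordinal.bddAbove_of_small ⟨s, hs⟩).trans_lt hx.1
    hγS ⟨s, hs⟩ ⟨hγx, hx.2⟩⟩

theorem eventually_gt_omega1 {γ : Ordinal} (hγ : γ < omega1) : ∀ᶠ δ in 𝓝[<] omega1, γ < δ :=
  mem_of_superset (Ioo_mem_nhdsLT hγ) fun _ hδ => hδ.1

theorem eventually_forall_Ioo_omega1 {P : Ordinal → Prop} (hP : ∀ᶠ x in 𝓝[<] omega1, P x) :
    ∀ᶠ δ in 𝓝[<] omega1, ∀ x ∈ Ioo δ omega1, P x := by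
  obtain ⟨γ, hγ, hγP⟩ := hasBasis_nhdsLT_omega1.eventually_iff.1 hP
  exact (eventually_gt_omega1 hγ).mono fun δ hδ x hx => hγP ⟨hδ.trans hx.1, hx.2⟩

theorem frequently_mem_of_not_countable {S : Set Ordinal} (hSω : S ⊆ Iio omega1)
    (hS : ¬ S.Countable) : ∃ᶠ x in 𝓝[<] omega1, x ∈ S := by
  intro hev
  obtain ⟨γ, hγ, hγS⟩ := hasBasis_nhdsLT_omega1.eventually_iff.1 hev
  refine hS ((countable_Iio_of_lt_omega1 hγ).insert γ |>.mono fun x hx => ?_)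
  exact (not_lt.1 fun hγx => hγS ⟨hγx, hSω hx⟩ hx).eq_or_lt

theorem exists_gt_of_frequently {P : Ordinal → Prop} (hP : ∃ᶠ x in 𝓝[<] omega1, P x)
    {γ : Ordinal} (hγ : γ < omega1) : ∃ x, P x ∧ γ < x ∧ x < omega1 :=
  (hP.and_eventually (Ioo_mem_nhdsLT hγ)).exists

theorem isSuccLimit_iSup_of_strictMono {d : ℕ → Ordinal} (hd : StrictMono d) :
    IsSuccLimit (⨆ n, d n) := by
  refine (isLUB_ciSup Ordinal.bddAbove_of_small).isSuccLimit_of_notMem (range_nonempty d) ?_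
  rintro ⟨n, hn⟩
  exact (hd n.lt_succ_self).not_ge (hn ▸ le_ciSup Ordinal.bddAbove_of_small _)

theorem exists_isSuccLimit_forall_lt {Q : Ordinal → Ordinal → Prop}
    (hQ : ∀ γ < omega1, ∀ᶠ δ in 𝓝[<] omega1, Q γ δ) :
    ∃ δ < omega1, IsSuccLimit δ ∧ ∀ γ < δ, Q γ δ := by
  have hnext : ∀ γ < omega1, ∃ γ' < omega1, γ < γ' ∧ ∀ β < γ, ∀ δ ∈ Ioo γ' omega1, Q β δ := by
    intro γ hγ
    have hev : ∀ᶠ δ in 𝓝[<] omega1, ∀ β ∈ Iio γ, Q β δ :=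
      (eventually_countable_ball (countable_Iio_of_lt_omega1 hγ)).2 fun β hβ =>
        hQ β (lt_trans hβ hγ)
    obtain ⟨γ₀, hγ₀, h⟩ := hasBasis_nhdsLT_omega1.eventually_iff.1 hev
    exact ⟨succ (max γ γ₀), succ_lt_omega1 (max_lt hγ hγ₀), lt_succ_of_le (le_max_left _ _),
      fun β hβ δ hδ => h ⟨((le_max_right _ _).trans (le_succ _)).trans_lt hδ.1, hδ.2⟩ β hβ⟩
  choose! g hgω hlt_g hgQ using hnext
  let d : ℕ → Ordinal := fun n => g^[n] 0
  have hd_succ (n : ℕ) : d (n + 1) = g (d n) := Function.iterate_succ_apply' g n 0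
  have hdω (n : ℕ) : d n < omega1 := by
    induction n with
    | zero => exact omega1_pos
    | succ n ih => exact hd_succ n ▸ hgω _ ih
  have hd : StrictMono d := strictMono_nat_of_lt_succ fun n => hd_succ n ▸ hlt_g _ (hdω n)
  have hδω : ⨆ n, d n < omega1 := iSup_lt_omega1 hdω
  refine ⟨⨆ n, d n, hδω, isSuccLimit_iSup_of_strictMono hd, fun γ hγ => ?_⟩
  obtain ⟨n, hn⟩ := exists_lt_of_lt_ciSup hγ
  refine hgQ (d n) (hdω n) γ hn _ ⟨?_, hδω⟩
  rw [← hd_succ]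
  exact (hd (Nat.lt_succ_self _)).trans_le (le_ciSup Ordinal.bddAbove_of_small (n + 2))

theorem exists_lt_forall_lt_of_finite {δ : Ordinal} (hδ : IsSuccLimit δ) {F : Set Ordinal}
    (hF : F.Finite) (hFδ : F ⊆ Iio δ) : ∃ γ < δ, ∀ x ∈ F, x < γ := by
  rcases F.eq_empty_or_nonempty with rfl | hne
  · exact ⟨⊥, hδ.bot_lt, by simp⟩
  · exact ⟨succ (sSup F), hδ.succ_lt (hFδ (hne.csSup_mem hF)), fun x hx =>
      lt_succ_of_le (le_csSup hF.bddAbove hx)⟩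

/-- C-sequences on `ω₁`; the values of `C` at `0` and from `ω₁` on are irrelevant. -/
structure IsCSequence (C : Ordinal → Set Ordinal) : Prop where
  subset_Iio : ∀ β, 0 < β → β < omega1 → C β ⊆ Iio β
  zero_mem : ∀ β, 0 < β → β < omega1 → 0 ∈ C β
  exists_ge : ∀ β, 0 < β → β < omega1 → ∀ γ < β, ∃ x ∈ C β, γ ≤ x
  finite_inter_Iio : ∀ β, 0 < β → β < omega1 → ∀ γ < β, (C β ∩ Iio γ).Finite

/-- The first step `min (C_β \ α)` of the walk from `β` to `α`. -/
noncomputable def walkStep (C : Ordinal → Set Ordinal) (β α : Ordinal) : Ordinal :=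
  sInf (C β \ Iio α)

/-- The point `max (C_β ∩ α)` which the first step of the walk from `β` to `α` contributes to the
lower trace. -/
noncomputable def lastBelow (C : Ordinal → Set Ordinal) (β α : Ordinal) : Ordinal :=
  sSup (C β ∩ Iio α)

/-- `L` is the lower trace of walks along `C`. -/
structure IsLowerTrace (C : Ordinal → Set Ordinal) (L : Ordinal → Ordinal → Set Ordinal) :
    Prop where
  self : ∀ α, L α α = ∅
  eq_insert : ∀ α β, 0 < α → α < β → β < omega1 →
    L α β = insert (lastBelow C β α) {ξ ∈ L α (walkStep C β α) | lastBelow C β α < ξ}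

/-- `ρ` is the maximal weight `ρ₁` of walks along `C`; the function `e_β` is `(ρ · β)`. -/
structure IsMaximalWeight (C : Ordinal → Set Ordinal) (ρ : Ordinal → Ordinal → ℕ) : Prop where
  self : ∀ α, ρ α α = 0
  eq_max : ∀ α β, α < β → β < omega1 →
    ρ α β = max (C β ∩ Iio α).ncard (ρ α (walkStep C β α))

variable {C : Ordinal → Set Ordinal} {L : Ordinal → Ordinal → Set Ordinal}
  {ρ : Ordinal → Ordinal → ℕ} {α β γ δ ξ : Ordinal} {A B : Set Ordinal}

namespace IsCSequence

theorem walkStep_mem_diff (hC : IsCSequence C) (hαβ : α < β) (hβ : β < omega1) :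
    walkStep C β α ∈ C β \ Iio α := by
  obtain ⟨x, hx, hαx⟩ := hC.exists_ge β hαβ.pos hβ α hαβ
  exact csInf_mem ⟨x, hx, hαx.not_gt⟩

theorem le_walkStep (hC : IsCSequence C) (hαβ : α < β) (hβ : β < omega1) :
    α ≤ walkStep C β α :=
  not_lt.1 (hC.walkStep_mem_diff hαβ hβ).2

theorem walkStep_lt (hC : IsCSequence C) (hαβ : α < β) (hβ : β < omega1) :
    walkStep C β α < β :=
  hC.subset_Iio β hαβ.pos hβ (hC.walkStep_mem_diff hαβ hβ).1

theorem inter_Iio_walkStep (hC : IsCSequence C) (hαβ : α < β) (hβ : β < omega1) :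
    C β ∩ Iio (walkStep C β α) = C β ∩ Iio α := by
  refine subset_antisymm (fun x hx => ⟨hx.1, ?_⟩)
    (inter_subset_inter_right _ (Iio_subset_Iio (hC.le_walkStep hαβ hβ)))
  by_contra hαx
  exact notMem_of_lt_csInf (s := C β \ Iio α) hx.2 (OrderBot.bddBelow _) ⟨hx.1, hαx⟩

theorem lastBelow_mem (hC : IsCSequence C) (hα : 0 < α) (hαβ : α < β) (hβ : β < omega1) :
    lastBelow C β α ∈ C β ∩ Iio α :=
  Nonempty.csSup_mem ⟨0, hC.zero_mem β hαβ.pos hβ, hα⟩ (hC.finite_inter_Iio β hαβ.pos hβ α hαβ)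

theorem le_lastBelow (hC : IsCSequence C) (hαβ : α < β) (hβ : β < omega1) (hξ : ξ ∈ C β)
    (hξα : ξ < α) : ξ ≤ lastBelow C β α :=
  le_csSup (hC.finite_inter_Iio β hαβ.pos hβ α hαβ).bddAbove ⟨hξ, hξα⟩

theorem inter_Iio_eq (hC : IsCSequence C) (hγβ : γ < β) (hβ : β < omega1)
    (hξ : lastBelow C β γ < ξ) (hξγ : ξ ≤ γ) : C β ∩ Iio ξ = C β ∩ Iio γ :=
  subset_antisymm (inter_subset_inter_right _ (Iio_subset_Iio hξγ)) fun _ hx =>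
    ⟨hx.1, (hC.le_lastBelow hγβ hβ hx.1 hx.2).trans_lt hξ⟩

theorem lastBelow_eq (hC : IsCSequence C) (hγβ : γ < β) (hβ : β < omega1)
    (hξ : lastBelow C β γ < ξ) (hξγ : ξ ≤ γ) : lastBelow C β ξ = lastBelow C β γ := by
  rw [lastBelow, lastBelow, hC.inter_Iio_eq hγβ hβ hξ hξγ]

theorem walkStep_eq (hC : IsCSequence C) (hγβ : γ < β) (hβ : β < omega1)
    (hξ : lastBelow C β γ < ξ) (hξγ : ξ ≤ γ) : walkStep C β ξ = walkStep C β γ := by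
  rw [walkStep, walkStep, ← sdiff_self_inter, hC.inter_Iio_eq hγβ hβ hξ hξγ, sdiff_self_inter]

theorem strictMonoOn_ncard_inter_Iio (hC : IsCSequence C) (hβ0 : 0 < β) (hβ : β < omega1) :
    StrictMonoOn (fun η => (C β ∩ Iio η).ncard) (C β) := by
  intro x hx y hy hxy
  refine ncard_lt_ncard ?_ (hC.finite_inter_Iio β hβ0 hβ y (hC.subset_Iio β hβ0 hβ hy))
  exact ⟨inter_subset_inter_right _ (Iio_subset_Iio hxy.le), fun h =>
    lt_irrefl x (h ⟨hx, hxy⟩).2⟩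

theorem finite_ofPred_ncard_inter_Iio_le (hC : IsCSequence C) (hβ0 : 0 < β) (hβ : β < omega1)
    (n : ℕ) : {η ∈ C β | (C β ∩ Iio η).ncard ≤ n}.Finite := by
  refine Finite.of_finite_image ((finite_Iic n).subset ?_)
    ((hC.strictMonoOn_ncard_inter_Iio hβ0 hβ).injOn.mono (sep_subset _ _))
  rintro _ ⟨η, hη, rfl⟩
  exact hη.2

theorem exists_mem_forall_lt_of_finite (hC : IsCSequence C) (hδ : IsSuccLimit δ)
    (hδω : δ < omega1) {F : Set Ordinal} (hF : F.Finite) (hFδ : F ⊆ Iio δ) :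
    ∃ ξ ∈ C δ, ξ < δ ∧ ∀ x ∈ F, x < ξ := by
  obtain ⟨γ, hγ, hFγ⟩ := exists_lt_forall_lt_of_finite hδ hF hFδ
  obtain ⟨ξ, hξ, hγξ⟩ := hC.exists_ge δ hδ.bot_lt hδω γ hγ
  exact ⟨ξ, hξ, hC.subset_Iio δ hδ.bot_lt hδω hξ, fun x hx => (hFγ x hx).trans_le hγξ⟩

end IsCSequence

namespace IsMaximalWeight

theorem finite_ofPred_le (hC : IsCSequence C) (hρ : IsMaximalWeight C ρ) (n : ℕ)
    (hβ : β < omega1) : {ξ | ξ < β ∧ ρ ξ β ≤ n}.Finite := by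
  induction β using WellFoundedLT.induction with
  | ind β ih =>
  rcases eq_or_ne β 0 with rfl | hβ0
  · simp
  have hcover : {ξ | ξ < β ∧ ρ ξ β ≤ n} ⊆ ⋃ η ∈ {η ∈ C β | (C β ∩ Iio η).ncard ≤ n},
      insert η {ξ | ξ < η ∧ ρ ξ η ≤ n} := by
    rintro ξ ⟨hξβ, hξn⟩
    rw [hρ.eq_max ξ β hξβ hβ, max_le_iff] at hξn
    refine mem_biUnion (x := walkStep C β ξ) ⟨(hC.walkStep_mem_diff hξβ hβ).1, ?_⟩ ?_
    · rw [hC.inter_Iio_walkStep hξβ hβ]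
      exact hξn.1
    · exact (hC.le_walkStep hξβ hβ).eq_or_lt.imp_right fun h => ⟨h, hξn.2⟩
  have hpos := pos_iff_ne_zero.2 hβ0
  refine ((hC.finite_ofPred_ncard_inter_Iio_le hpos hβ n).biUnion fun η hη => ?_).subset hcover
  have hηβ : η < β := hC.subset_Iio β hpos hβ hη.1
  exact (ih η hηβ (hηβ.trans hβ)).insert η

theorem eq_max_of_lastBelow_lt (hC : IsCSequence C) (hρ : IsMaximalWeight C ρ) (hγβ : γ < β)
    (hβ : β < omega1) (hξ : lastBelow C β γ < ξ) (hξγ : ξ ≤ γ) :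
    ρ ξ β = max (C β ∩ Iio γ).ncard (ρ ξ (walkStep C β γ)) := by
  rw [hρ.eq_max ξ β (hξγ.trans_lt hγβ) hβ, hC.inter_Iio_eq hγβ hβ hξ hξγ,
    hC.walkStep_eq hγβ hβ hξ hξγ]

theorem finite_ofPred_ne (hC : IsCSequence C) (hρ : IsMaximalWeight C ρ) (hγβ : γ ≤ β)
    (hβ : β < omega1) : {ξ | ξ < γ ∧ ρ ξ β ≠ ρ ξ γ}.Finite := by
  induction γ using WellFoundedLT.induction generalizing β with
  | ind γ ihγ =>
  induction β using WellFoundedLT.induction with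
  | ind β ihβ =>
  rcases hγβ.eq_or_lt with rfl | hγβ
  · simp
  rcases eq_or_ne γ 0 with rfl | hγ0
  · simp
  set c := lastBelow C β γ
  set η := walkStep C β γ
  have hcγ : c < γ := (hC.lastBelow_mem (pos_iff_ne_zero.2 hγ0) hγβ hβ).2
  have hγη : γ ≤ η := hC.le_walkStep hγβ hβ
  have hηβ : η < β := hC.walkStep_lt hγβ hβ
  have hbelow : {ξ | ξ < c ∧ ρ ξ β ≠ ρ ξ γ}.Finite := by
    refine ((ihγ c hcγ (hcγ.le.trans hγβ.le) hβ).union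
      (ihγ c hcγ hcγ.le (hγβ.trans hβ))).subset ?_
    rintro ξ ⟨hξc, hne⟩
    by_contra! hξ
    simp only [mem_union, mem_ofPred_eq, hξc, true_and, not_or, not_not] at hξ
    exact hne (hξ.1.trans hξ.2.symm)
  -- Above `c` the weight `ρ · β` is `ρ · η` truncated from below at the constant `|C_β ∩ γ|`.
  refine ((hbelow.insert c).union ((ihβ η hηβ hγη (hηβ.trans hβ)).union
    (hρ.finite_ofPred_le hC (C β ∩ Iio γ).ncard (hηβ.trans hβ)))).subset ?_
  rintro ξ ⟨hξγ, hne⟩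
  by_contra hξ
  simp only [mem_union, mem_insert_iff, mem_ofPred_eq, not_or, not_and, not_not, not_le] at hξ
  obtain ⟨⟨hξc, hlow⟩, hη, hbig⟩ := hξ
  rcases lt_or_gt_of_ne hξc with hξc | hcξ
  · exact hne (hlow hξc)
  · refine hne ?_
    rw [hρ.eq_max_of_lastBelow_lt hC hγβ hβ hcξ hξγ.le,
      max_eq_right (hbig (hξγ.trans_le hγη)).le, hη hξγ]

theorem finite_ofPred_ne_of_le (hC : IsCSequence C) (hρ : IsMaximalWeight C ρ)
    (hγα : γ ≤ α) (hα : α < omega1) (hγβ : γ ≤ β) (hβ : β < omega1) :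
    {ξ | ξ < γ ∧ ρ ξ α ≠ ρ ξ β}.Finite := by
  refine ((hρ.finite_ofPred_ne hC hγα hα).union (hρ.finite_ofPred_ne hC hγβ hβ)).subset ?_
  rintro ξ ⟨hξγ, hne⟩
  by_contra! hξ
  simp only [mem_union, mem_ofPred_eq, hξγ, true_and, not_or, not_not] at hξ
  exact hne (hξ.1.trans hξ.2.symm)

end IsMaximalWeight

namespace IsLowerTrace

theorem finite_and_subset_Iio (hC : IsCSequence C) (hL : IsLowerTrace C L) (hα : 0 < α)
    (hαβ : α ≤ β) (hβ : β < omega1) : (L α β).Finite ∧ L α β ⊆ Iio α := by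
  induction β using WellFoundedLT.induction with
  | ind β ih =>
  rcases hαβ.eq_or_lt with rfl | hαβ
  · simp [hL.self]
  have hstep := hC.walkStep_lt hαβ hβ
  obtain ⟨hfin, hsub⟩ := ih _ hstep (hC.le_walkStep hαβ hβ) (hstep.trans hβ)
  rw [hL.eq_insert α β hα hαβ hβ]
  exact ⟨(hfin.subset (sep_subset _ _)).insert _,
    insert_subset (hC.lastBelow_mem hα hαβ hβ).2 ((sep_subset _ _).trans hsub)⟩

theorem finite (hC : IsCSequence C) (hL : IsLowerTrace C L) (hα : 0 < α) (hαβ : α ≤ β)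
    (hβ : β < omega1) : (L α β).Finite :=
  (hL.finite_and_subset_Iio hC hα hαβ hβ).1

theorem subset_Iio (hC : IsCSequence C) (hL : IsLowerTrace C L) (hα : 0 < α) (hαβ : α ≤ β)
    (hβ : β < omega1) : L α β ⊆ Iio α :=
  (hL.finite_and_subset_Iio hC hα hαβ hβ).2

theorem lastBelow_mem (hL : IsLowerTrace C L) (hα : 0 < α) (hαβ : α < β) (hβ : β < omega1) :
    lastBelow C β α ∈ L α β := by
  rw [hL.eq_insert α β hα hαβ hβ]
  exact mem_insert _ _

theorem le_of_mem (hC : IsCSequence C) (hL : IsLowerTrace C L) (hα : 0 < α) (hαβ : α < β)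
    (hβ : β < omega1) {ξ η : Ordinal} (hξ : ξ ∈ C β) (hξα : ξ < α) (hη : η ∈ L α β) :
    ξ ≤ η := by
  refine (hC.le_lastBelow hαβ hβ hξ hξα).trans ?_
  rw [hL.eq_insert α β hα hαβ hβ] at hη
  rcases hη with rfl | hη
  · exact le_rfl
  · exact hη.2.le

theorem eq_union (hC : IsCSequence C) (hL : IsLowerTrace C L) (hα : 0 < α) (hαβ : α ≤ β)
    (hβγ : β ≤ γ) (hγ : γ < omega1) (hlt : ∀ x ∈ L β γ, ∀ y ∈ L α β, x < y) :
    L α γ = L β γ ∪ L α β := by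
  rcases hαβ.eq_or_lt with rfl | hαβ
  · simp [hL.self]
  induction γ using WellFoundedLT.induction with
  | ind γ ih =>
  rcases hβγ.eq_or_lt with rfl | hβγ
  · simp [hL.self]
  have hβ : 0 < β := hα.trans hαβ
  set c := lastBelow C γ β
  set η := walkStep C γ β
  have hηγ : η < γ := hC.walkStep_lt hβγ hγ
  have hLβγ := hL.eq_insert β γ hβ hβγ hγ
  have hc : ∀ y ∈ L α β, c < y := hlt c (hL.lastBelow_mem hβ hβγ hγ)
  have hltη : ∀ x ∈ L β η, ∀ y ∈ L α β, x < y := fun x hx y hy =>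
    (lt_or_ge c x).elim (fun hcx => hlt x (hLβγ ▸ Or.inr ⟨hx, hcx⟩) y hy)
      fun hxc => hxc.trans_lt (hc y hy)
  have hcα : c < α :=
    (hc _ (hL.lastBelow_mem hα hαβ (hβγ.trans hγ))).trans
      (hC.lastBelow_mem hα hαβ (hβγ.trans hγ)).2
  have hLαγ := hL.eq_insert α γ hα (hαβ.trans hβγ) hγ
  rw [hC.lastBelow_eq hβγ hγ hcα hαβ.le, hC.walkStep_eq hβγ hγ hcα hαβ.le,
    ih η hηγ (hC.le_walkStep hβγ hγ) (hηγ.trans hγ) hltη] at hLαγ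
  have hsep : {ξ ∈ L β η ∪ L α β | c < ξ} = {ξ ∈ L β η | c < ξ} ∪ L α β := by
    rw [← inter_ofPred_eq_sep, union_inter_distrib_right, inter_eq_left (t := {y | c < y}).2 hc,
      inter_ofPred_eq_sep]
  rw [hLαγ, hLβγ, insert_union, hsep]

end IsLowerTrace

section Oscillation

variable {s s' t t' : Ordinal → ℕ} {F E E' : Set Ordinal} {j : ℕ}

/-- At the greatest element of `F`, if there is one, `s` exceeds `t`. The oscillation can then be
computed separately on `F` and on any end extension of `F`. -/
def EndsAbove (s t : Ordinal → ℕ) (F : Set Ordinal) : Prop :=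
  ∀ x, IsGreatest F x → t x < s x

theorem EndsAbove.congr (h : EndsAbove s t F) (hs : EqOn s s' F) (ht : EqOn t t' F) :
    EndsAbove s' t' F := fun x hx =>
  hs hx.1 ▸ ht hx.1 ▸ h x hx

theorem endsAbove_union (hFE : ∀ x ∈ F, ∀ y ∈ E, x < y) (hE : E.Nonempty)
    (hst : ∀ x ∈ E, t x < s x) : EndsAbove s t (F ∪ E) := by
  rintro x ⟨hxF | hxE, hmax⟩
  · obtain ⟨y, hy⟩ := hE
    exact absurd (hmax (Or.inr hy)) (hFE x hxF y hy).not_ge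
  · exact hst x hxE

theorem oscSet_congr (hs : EqOn s s' F) (ht : EqOn t t' F) : OscSet s t F = OscSet s' t' F := by
  ext ξ
  refine and_congr_right fun hξ => exists_congr fun η => and_congr_right fun hη => ?_
  rw [hs hξ, ht hξ, hs hη, ht hη]

theorem oscSet_subset : OscSet s t F ⊆ F := fun _ h => h.1

theorem oscSet_union (hFE : ∀ x ∈ F, ∀ y ∈ E, x < y) (hF : EndsAbove s t F) :
    OscSet s t (F ∪ E) = OscSet s t F ∪ OscSet s t E := by
  ext ξ
  constructor
  · rintro ⟨hξF | hξE, η, hηF | hηE, hηξ, hpred, hη, hξ⟩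
    · exact Or.inl ⟨hξF, η, hηF, hηξ, fun ζ hζ => hpred ζ (Or.inl hζ), hη, hξ⟩
    · exact absurd (hFE ξ hξF η hηE) hηξ.not_gt
    · exact absurd (hF η ⟨hηF, fun y hy => hpred y (Or.inl hy) (hFE y hy ξ hξE)⟩) hη.not_gt
    · exact Or.inr ⟨hξE, η, hηE, hηξ, fun ζ hζ => hpred ζ (Or.inr hζ), hη, hξ⟩
  · rintro (⟨hξF, η, hηF, hηξ, hpred, hval⟩ | ⟨hξE, η, hηE, hηξ, hpred, hval⟩)
    · refine ⟨Or.inl hξF, η, Or.inl hηF, hηξ, ?_, hval⟩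
      rintro ζ (hζF | hζE) hζξ
      · exact hpred ζ hζF hζξ
      · exact absurd (hFE ξ hξF ζ hζE) hζξ.not_gt
    · refine ⟨Or.inr hξE, η, Or.inr hηE, hηξ, ?_, hval⟩
      rintro ζ (hζF | hζE) hζξ
      · exact (hFE ζ hζF η hηE).le
      · exact hpred ζ hζE hζξ

theorem ncard_oscSet_union (hF : F.Finite) (hE : E.Finite) (hFE : ∀ x ∈ F, ∀ y ∈ E, x < y)
    (hst : EndsAbove s t F) :
    (OscSet s t (F ∪ E)).ncard = (OscSet s t F).ncard + (OscSet s t E).ncard := by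
  have hdisj : Disjoint (OscSet s t F) (OscSet s t E) := disjoint_left.2 fun x hxF hxE =>
    lt_irrefl x (hFE x (oscSet_subset hxF) x (oscSet_subset hxE))
  rw [oscSet_union hFE hst,
    ncard_union_eq hdisj (hF.subset oscSet_subset) (hE.subset oscSet_subset)]

theorem oscSet_union_eq_singleton (hF : F.Finite) (hF₀ : F.Nonempty) (hE₀ : E.Nonempty)
    (hFE : ∀ x ∈ F, ∀ y ∈ E, x < y) (hFst : ∀ x ∈ F, s x ≤ t x) (hEst : ∀ x ∈ E, t x < s x) :
    OscSet s t (F ∪ E) = {sInf E} := by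
  have hmin : sInf E ∈ E := csInf_mem hE₀
  have hmax : sSup F ∈ F := hF₀.csSup_mem hF
  ext ξ
  rw [mem_singleton_iff]
  constructor
  · rintro ⟨hξ, η, hη, -, hpred, hηst, hξst⟩
    have hξE : ξ ∈ E := hξ.resolve_left fun h => (hFst ξ h).not_gt hξst
    have hηF : η ∈ F := hη.resolve_right fun h => (hEst η h).not_ge hηst
    refine (csInf_le' hξE).antisymm' (not_lt.1 fun hlt => ?_)
    exact (hFE η hηF _ hmin).not_ge (hpred _ (Or.inr hmin) hlt)
  · rintro rfl
    refine ⟨Or.inr hmin, sSup F, Or.inl hmax, hFE _ hmax _ hmin, ?_, hFst _ hmax, hEst _ hmin⟩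
    rintro ζ (hζF | hζE) hζ
    · exact le_csSup hF.bddAbove hζF
    · exact absurd (csInf_le' hζE) hζ.not_ge

/-- `s` and `t` oscillate `j` times on `F`, in a way that can be prolonged to end extensions. -/
structure HasOsc (s t : Ordinal → ℕ) (F : Set Ordinal) (j : ℕ) : Prop where
  ncard_eq : (OscSet s t F).ncard = j
  endsAbove : EndsAbove s t F

theorem HasOsc.congr (h : HasOsc s t F j) (hs : EqOn s s' F) (ht : EqOn t t' F) :
    HasOsc s' t' F j :=
  ⟨oscSet_congr hs ht ▸ h.ncard_eq, h.endsAbove.congr hs ht⟩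

theorem HasOsc.succ_of_extensions (h : HasOsc s t F j) (hF : F.Finite) (hE : E.Finite)
    (hE' : E'.Finite) (hE₀ : E.Nonempty) (hE'₀ : E'.Nonempty)
    (hFE : ∀ x ∈ F, ∀ y ∈ E, x < y) (hFEE' : ∀ x ∈ F ∪ E, ∀ y ∈ E', x < y)
    (hEst : ∀ x ∈ E, s x ≤ t x) (hE'st : ∀ x ∈ E', t x < s x) :
    HasOsc s t (F ∪ E ∪ E') (j + 1) := by
  refine ⟨?_, endsAbove_union hFEE' hE'₀ hE'st⟩
  have hFlt : ∀ x ∈ F, ∀ y ∈ E ∪ E', x < y := fun x hx y hy =>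
    hy.elim (hFE x hx y) (hFEE' x (Or.inl hx) y)
  rw [union_assoc, ncard_oscSet_union hF (hE.union hE') hFlt h.endsAbove, h.ncard_eq,
    oscSet_union_eq_singleton hE hE₀ hE'₀ (fun x hx => hFEE' x (Or.inr hx)) hEst hE'st,
    ncard_singleton]

end Oscillation

/-- The functions `e_a`, for `a ∈ A`, take simultaneously large values on any finite set of ordinals
from `ν` on. -/
def LargeFrom (ρ : Ordinal → Ordinal → ℕ) (A : Set Ordinal) (ν : Ordinal) : Prop :=
  ∀ n : ℕ, ∀ F : Set Ordinal, F.Finite → F ⊆ Ico ν omega1 →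
    ∃ᶠ a in 𝓝[<] omega1, a ∈ A ∧ ∀ x ∈ F, n < ρ x a

theorem exists_frequently_forall_lt_weight (hC : IsCSequence C) (hρ : IsMaximalWeight C ρ)
    (hA : ∃ᶠ a in 𝓝[<] omega1, a ∈ A) (n : ℕ) :
    ∃ ν < omega1, ∀ F : Set Ordinal, F.Finite → F ⊆ Ico ν omega1 →
      ∃ᶠ a in 𝓝[<] omega1, a ∈ A ∧ ∀ x ∈ F, n < ρ x a := by
  by_contra! hbad
  choose! F hF hFν hsmall using hbad
  -- For `a` above a closure point `δ` of `ν ↦ F ν`, the sets `F ν` with `ν < δ` provide cofinally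
  -- many `x < δ` with `ρ x a ≤ n`.
  obtain ⟨δ, hδω, hδ, hδF⟩ := exists_isSuccLimit_forall_lt
    (Q := fun ν δ => (∀ x ∈ F ν, x < δ) ∧
      ∀ a ∈ Ioo δ omega1, a ∈ A → ∃ x ∈ F ν, ρ x a ≤ n) fun ν hν =>
    ((hF ν hν).eventually_all.2 fun x hx => eventually_gt_omega1 (hFν ν hν hx).2).and
      (eventually_forall_Ioo_omega1 (hsmall ν hν))
  obtain ⟨a, haA, hδa, haω⟩ := exists_gt_of_frequently hA hδω
  have hfin : {ξ | ξ < δ ∧ ρ ξ a ≤ n}.Finite :=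
    (hρ.finite_ofPred_le hC n haω).subset fun ξ hξ => ⟨hξ.1.trans hδa, hξ.2⟩
  obtain ⟨ν, hν, hbound⟩ := exists_lt_forall_lt_of_finite hδ hfin fun ξ hξ => hξ.1
  obtain ⟨hFδ, ha⟩ := hδF ν hν
  obtain ⟨x, hx, hxn⟩ := ha a ⟨hδa, haω⟩ haA
  exact (hbound x ⟨hFδ x hx, hxn⟩).not_ge (hFν ν (hν.trans hδω) hx).1

theorem exists_largeFrom (hC : IsCSequence C) (hρ : IsMaximalWeight C ρ)
    (hA : ∃ᶠ a in 𝓝[<] omega1, a ∈ A) : ∃ ν < omega1, LargeFrom ρ A ν := by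
  choose ν hν hlarge using exists_frequently_forall_lt_weight hC hρ hA
  refine ⟨⨆ n, ν n, iSup_lt_omega1 hν, fun n F hF hFν => hlarge n F hF fun x hx => ?_⟩
  exact ⟨(le_ciSup Ordinal.bddAbove_of_small n).trans (hFν hx).1, (hFν hx).2⟩

/-- The elements `a'` of `A` such that `e_{a'}` agrees with `e_a` on `F`. -/
def twins (ρ : Ordinal → Ordinal → ℕ) (A F : Set Ordinal) (a : Ordinal) : Set Ordinal :=
  {a' ∈ A | EqOn (ρ · a') (ρ · a) F}

theorem self_mem_twins {F : Set Ordinal} {a : Ordinal} (ha : a ∈ A) : a ∈ twins ρ A F a :=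
  ⟨ha, eqOn_refl _ _⟩

/-- The sets of twins determined by finitely many coordinates below `γ`. -/
def twinClasses (ρ : Ordinal → Ordinal → ℕ) (A : Set Ordinal) (γ : Ordinal) :
    Set (Set Ordinal) :=
  {S | ∃ F : Set Ordinal, F.Finite ∧ F ⊆ Iio γ ∧ ∃ a, S = twins ρ A F a}

theorem countable_twinClasses (hγ : γ < omega1) : (twinClasses ρ A γ).Countable := by
  have hcount : {p : Set (Ordinal × ℕ) | p.Finite ∧ p ⊆ Iio γ ×ˢ univ}.Countable :=
    countable_ofPred_finite_subset ((countable_Iio_of_lt_omega1 hγ).prod countable_univ)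
  refine (hcount.image fun p => {a ∈ A | ∀ z ∈ p, ρ z.1 a = z.2}).mono ?_
  rintro _ ⟨F, hF, hFγ, a, rfl⟩
  refine ⟨(fun x => (x, ρ x a)) '' F, ⟨hF.image _, ?_⟩, ?_⟩
  · rintro _ ⟨x, hx, rfl⟩
    exact ⟨hFγ hx, mem_univ _⟩
  · simp [twins, EqOn]

/-- The ordinals `δ` below some `a ∈ A` and `b ∈ B` with `L(δ, b) = F` and `e_a ≤ e_b` on
`[ξ, δ)`, where `ξ ∈ C_δ`. -/
def coherenceLevels (C : Ordinal → Set Ordinal) (L : Ordinal → Ordinal → Set Ordinal)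
    (ρ : Ordinal → Ordinal → ℕ) (A B F : Set Ordinal) (ξ : Ordinal) : Set Ordinal :=
  {δ | ∃ a ∈ A, ∃ b ∈ B, δ < a ∧ δ < b ∧ L δ b = F ∧ ξ ∈ C δ ∧ ∀ η ∈ Ico ξ δ, ρ η a ≤ ρ η b}

/-- The closure properties of `δ = M ∩ ω₁`, for a countable elementary submodel `M` containing
`C`, `A` and `B`, which the oscillation argument uses. -/
structure IsReflecting (C : Ordinal → Set Ordinal) (L : Ordinal → Ordinal → Set Ordinal)
    (ρ : Ordinal → Ordinal → ℕ) (A B : Set Ordinal) (δ : Ordinal) : Prop where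
  lt_omega1 : δ < omega1
  isSuccLimit : IsSuccLimit δ
  frequently_mem_coherenceLevels : ∀ F : Set Ordinal, F.Finite → F ⊆ Iio δ → ∀ a b, ∀ ξ < δ,
    δ ∈ coherenceLevels C L ρ (twins ρ A F a) (twins ρ B F b) F ξ →
    ∃ᶠ δ' in 𝓝[<] omega1, δ' ∈ coherenceLevels C L ρ (twins ρ A F a) (twins ρ B F b) F ξ
  exists_largeFrom : ∀ F : Set Ordinal, F.Finite → F ⊆ Iio δ → ∀ a ∈ A, δ < a →
    ∃ ν < δ, LargeFrom ρ (twins ρ A F a) ν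
  exists_twin_mem_Ioo : ∀ F : Set Ordinal, F.Finite → F ⊆ Iio δ → ∀ a ∈ A, δ < a →
    ∀ ξ < δ, ∃ a' ∈ twins ρ A F a, a' ∈ Ioo ξ δ

theorem eventually_mem_coherenceLevels_imp (hγ : γ < omega1) :
    ∀ᶠ δ in 𝓝[<] omega1, ∀ A' ∈ twinClasses ρ A γ, ∀ B' ∈ twinClasses ρ B γ,
      ∀ F ∈ {F : Set Ordinal | F.Finite ∧ F ⊆ Iio γ}, ∀ ξ ∈ Iio γ,
        δ ∈ coherenceLevels C L ρ A' B' F ξ →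
        ∃ᶠ δ' in 𝓝[<] omega1, δ' ∈ coherenceLevels C L ρ A' B' F ξ := by
  have hIio := countable_Iio_of_lt_omega1 hγ
  refine (eventually_countable_ball (countable_twinClasses hγ)).2 fun A' _ =>
    (eventually_countable_ball (countable_twinClasses hγ)).2 fun B' _ =>
    (eventually_countable_ball (countable_ofPred_finite_subset hIio)).2 fun F _ =>
    (eventually_countable_ball hIio).2 fun ξ _ => ?_
  by_cases hfreq : ∃ᶠ δ' in 𝓝[<] omega1, δ' ∈ coherenceLevels C L ρ A' B' F ξ
  · exact Eventually.of_forall fun _ _ => hfreq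
  · exact (not_frequently.1 hfreq).mono fun _ hδ h => absurd h hδ

theorem eventually_exists_largeFrom_and_mem_Ioo (hC : IsCSequence C) (hρ : IsMaximalWeight C ρ)
    (hA : A ⊆ Iio omega1) (hγ : γ < omega1) :
    ∀ᶠ δ in 𝓝[<] omega1, ∀ A' ∈ twinClasses ρ A γ, (∃ a ∈ A', δ < a) →
      (∃ ν < δ, LargeFrom ρ A' ν) ∧ ∃ a' ∈ A', a' ∈ Ioo γ δ := by
  refine (eventually_countable_ball (countable_twinClasses hγ)).2 fun A' hA' => ?_
  by_cases hfreq : ∃ᶠ a in 𝓝[<] omega1, a ∈ A'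
  · obtain ⟨ν, hν, hlarge⟩ := exists_largeFrom hC hρ hfreq
    obtain ⟨a', ha', hγa', ha'ω⟩ := exists_gt_of_frequently hfreq hγ
    filter_upwards [eventually_gt_omega1 hν, eventually_gt_omega1 ha'ω] with δ hνδ ha'δ _
    exact ⟨⟨ν, hνδ, hlarge⟩, a', ha', hγa', ha'δ⟩
  · filter_upwards [eventually_forall_Ioo_omega1 (not_frequently.1 hfreq)] with δ hδ
    rintro ⟨a, ha, hδa⟩
    obtain ⟨F, -, -, a₀, rfl⟩ := hA'
    exact absurd ha (hδ a ⟨hδa, hA ha.1⟩)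

theorem exists_isReflecting (hC : IsCSequence C) (hρ : IsMaximalWeight C ρ)
    (hA : A ⊆ Iio omega1) : ∃ δ, IsReflecting C L ρ A B δ := by
  obtain ⟨δ, hδω, hδ, hQ⟩ := exists_isSuccLimit_forall_lt fun γ hγ =>
    (eventually_mem_coherenceLevels_imp (C := C) (L := L) (ρ := ρ) (A := A) (B := B) hγ).and
      (eventually_exists_largeFrom_and_mem_Ioo hC hρ hA hγ)
  have hbound {F : Set Ordinal} (hF : F.Finite) (hFδ : F ⊆ Iio δ) {ξ : Ordinal} (hξ : ξ < δ) :
      ∃ γ < δ, F ⊆ Iio γ ∧ ξ < γ := by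
    obtain ⟨γ, hγ, hFγ⟩ :=
      exists_lt_forall_lt_of_finite hδ (hF.insert ξ) (insert_subset hξ hFδ)
    exact ⟨γ, hγ, fun x hx => hFγ x (Or.inr hx), hFγ ξ (Or.inl rfl)⟩
  refine ⟨δ, hδω, hδ, ?_, ?_, ?_⟩
  · intro F hF hFδ a b ξ hξ
    obtain ⟨γ, hγ, hFγ, hξγ⟩ := hbound hF hFδ hξ
    exact (hQ γ hγ).1 _ ⟨F, hF, hFγ, a, rfl⟩ _ ⟨F, hF, hFγ, b, rfl⟩ F ⟨hF, hFγ⟩ ξ hξγ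
  · intro F hF hFδ a ha hδa
    obtain ⟨γ, hγ, hFγ, -⟩ := hbound hF hFδ hδ.bot_lt
    exact ((hQ γ hγ).2 _ ⟨F, hF, hFγ, a, rfl⟩ ⟨a, self_mem_twins ha, hδa⟩).1
  · intro F hF hFδ a ha hδa ξ hξ
    obtain ⟨γ, hγ, hFγ, hξγ⟩ := hbound hF hFδ hξ
    obtain ⟨a', ha', hγa', ha'δ⟩ :=
      ((hQ γ hγ).2 _ ⟨F, hF, hFγ, a, rfl⟩ ⟨a, self_mem_twins ha, hδa⟩).2
    exact ⟨a', ha', hξγ.trans hγa', ha'δ⟩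

/-- The lower trace from `δ` to `b'` end-extends the one to `b` by the nonempty block `E`, and
`e_{b'}` agrees with `e_b` on the latter. -/
structure TraceExtends (L : Ordinal → Ordinal → Set Ordinal) (ρ : Ordinal → Ordinal → ℕ)
    (δ b b' : Ordinal) (E : Set Ordinal) : Prop where
  eqOn : EqOn (ρ · b') (ρ · b) (L δ b)
  finite : E.Finite
  nonempty : E.Nonempty
  forall_lt : ∀ x ∈ L δ b, ∀ y ∈ E, x < y
  eq_union : L δ b' = L δ b ∪ E

namespace IsReflecting

variable {a b ν : Ordinal}

theorem exists_traceExtends_le (hG : IsReflecting C L ρ A B δ) (hC : IsCSequence C)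
    (hL : IsLowerTrace C L) (hρ : IsMaximalWeight C ρ) (hA : A ⊆ Iio omega1)
    (hB : B ⊆ Iio omega1) (ha : a ∈ A) (hδa : δ < a) (hb : b ∈ B) (hδb : δ < b) (hν : ν < δ) :
    ∃ a' ∈ twins ρ A (L δ b) a, δ < a' ∧ ∃ b' ∈ B, δ < b' ∧
      ∃ E ⊆ Ico ν δ, TraceExtends L ρ δ b b' E ∧ ∀ x ∈ E, ρ x a' ≤ ρ x b' := by
  have hδ0 : 0 < δ := hG.isSuccLimit.bot_lt
  have hF := hL.finite hC hδ0 hδb.le (hB hb)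
  have hFδ := hL.subset_Iio hC hδ0 hδb.le (hB hb)
  have hD := hρ.finite_ofPred_ne_of_le hC hδa.le (hA ha) hδb.le (hB hb)
  obtain ⟨ξ, hξC, hξδ, hξ⟩ := hC.exists_mem_forall_lt_of_finite hG.isSuccLimit hG.lt_omega1
    ((hF.union hD).insert ν) (insert_subset hν (union_subset hFδ fun x hx => hx.1))
  have hagree : ∀ η ∈ Ico ξ δ, ρ η a ≤ ρ η b := fun η hη => by
    by_contra! hlt
    exact (hξ η (Or.inr (Or.inr ⟨hη.2, hlt.ne'⟩))).not_ge hη.1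
  obtain ⟨δ', ⟨a', ha', b', hb', hδ'a', hδ'b', hLδ', hξδ', hle⟩, hδδ', hδ'ω⟩ :=
    exists_gt_of_frequently (hG.frequently_mem_coherenceLevels _ hF hFδ a b ξ hξδ
      ⟨a, self_mem_twins ha, b, self_mem_twins hb, hδa, hδb, rfl, hξC, hagree⟩) hG.lt_omega1
  -- As `ξ ∈ C_{δ'}`, the whole trace from `δ` to `δ'` lies above `ξ`, hence above `L δ b`.
  have hEξ : L δ δ' ⊆ Ico ξ δ := fun y hy =>
    ⟨hL.le_of_mem hC hδ0 hδδ' hδ'ω hξδ' hξδ hy, hL.subset_Iio hC hδ0 hδδ'.le hδ'ω hy⟩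
  have hFE : ∀ x ∈ L δ b, ∀ y ∈ L δ δ', x < y := fun x hx y hy =>
    (hξ x (Or.inr (Or.inl hx))).trans_le (hEξ hy).1
  refine ⟨a', ha', hδδ'.trans hδ'a', b', hb'.1, hδδ'.trans hδ'b', L δ δ',
    hEξ.trans (Ico_subset_Ico_left (hξ ν (Or.inl rfl)).le),
    ⟨hb'.2, hL.finite hC hδ0 hδδ'.le hδ'ω, ⟨_, hL.lastBelow_mem hδ0 hδδ' hδ'ω⟩, hFE, ?_⟩,
    fun x hx => hle x ⟨(hEξ hx).1, (hEξ hx).2.trans hδδ'⟩⟩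
  rw [← hLδ'] at hFE ⊢
  exact hL.eq_union hC hδ0 hδδ'.le hδ'b'.le (hB hb'.1) hFE

theorem exists_traceExtends_lt (hG : IsReflecting C L ρ A B δ) (hC : IsCSequence C)
    (hL : IsLowerTrace C L) (hρ : IsMaximalWeight C ρ) (hA : A ⊆ Iio omega1)
    (hB : B ⊆ Iio omega1) (ha : a ∈ A) (hδa : δ < a) (hb : b ∈ B) (hδb : δ < b) :
    ∃ a' ∈ twins ρ A (L δ b) a, δ < a' ∧ ∃ b' ∈ B, δ < b' ∧
      ∃ E, TraceExtends L ρ δ b b' E ∧ ∀ x ∈ E, ρ x b' < ρ x a' := by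
  have hδ0 : 0 < δ := hG.isSuccLimit.bot_lt
  obtain ⟨ν, hν, hlarge⟩ := hG.exists_largeFrom _ (hL.finite hC hδ0 hδb.le (hB hb))
    (hL.subset_Iio hC hδ0 hδb.le (hB hb)) a ha hδa
  obtain ⟨-, -, -, b', hb', hδb', E, hEν, hE, -⟩ :=
    hG.exists_traceExtends_le hC hL hρ hA hB ha hδa hb hδb hν
  obtain ⟨n, hn⟩ := (hE.finite.image (ρ · b')).bddAbove
  have hEω : E ⊆ Ico ν omega1 := hEν.trans (Ico_subset_Ico_right hG.lt_omega1.le)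
  obtain ⟨a', ⟨ha', hna'⟩, hδa', -⟩ :=
    exists_gt_of_frequently (hlarge n E hE.finite hEω) hG.lt_omega1
  exact ⟨a', ha', hδa', b', hb', hδb', E, hE, fun x hx =>
    (hn (mem_image_of_mem _ hx)).trans_lt (hna' x hx)⟩

theorem exists_hasOsc_succ (hG : IsReflecting C L ρ A B δ) (hC : IsCSequence C)
    (hL : IsLowerTrace C L) (hρ : IsMaximalWeight C ρ) (hA : A ⊆ Iio omega1)
    (hB : B ⊆ Iio omega1) (ha : a ∈ A) (hδa : δ < a) (hb : b ∈ B) (hδb : δ < b) {j : ℕ}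
    (hosc : HasOsc (ρ · a) (ρ · b) (L δ b) j) :
    ∃ a' ∈ twins ρ A (L δ b) a, δ < a' ∧ ∃ b' ∈ B, δ < b' ∧ L δ b ⊆ L δ b' ∧
      HasOsc (ρ · a') (ρ · b') (L δ b') (j + 1) := by
  have hδ0 : 0 < δ := hG.isSuccLimit.bot_lt
  obtain ⟨a₁, ha₁, hδa₁, b₁, hb₁, hδb₁, E₁, -, hE₁, hle⟩ :=
    hG.exists_traceExtends_le hC hL hρ hA hB ha hδa hb hδb hδ0
  obtain ⟨a₂, ha₂, hδa₂, b₂, hb₂, hδb₂, E₂, hE₂, hlt⟩ :=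
    hG.exists_traceExtends_lt hC hL hρ hA hB ha₁.1 hδa₁ hb₁ hδb₁
  have hsub : L δ b ⊆ L δ b₁ := hE₁.eq_union ▸ subset_union_left
  have hsubE : E₁ ⊆ L δ b₁ := hE₁.eq_union ▸ subset_union_right
  have heqa : EqOn (ρ · a₂) (ρ · a) (L δ b) := (ha₂.2.mono hsub).trans ha₁.2
  have heqb : EqOn (ρ · b₂) (ρ · b) (L δ b) := (hE₂.eqOn.mono hsub).trans hE₁.eqOn
  have hle' : ∀ x ∈ E₁, ρ x a₂ ≤ ρ x b₂ := fun x hx =>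
    ((ha₂.2 (hsubE hx)).trans_le (hle x hx)).trans_eq (hE₂.eqOn (hsubE hx)).symm
  refine ⟨a₂, ⟨ha₂.1, heqa⟩, hδa₂, b₂, hb₂, hδb₂,
    hsub.trans (hE₂.eq_union ▸ subset_union_left), ?_⟩
  rw [hE₂.eq_union, hE₁.eq_union]
  exact (hosc.congr heqa.symm heqb.symm).succ_of_extensions
    (hL.finite hC hδ0 hδb.le (hB hb)) hE₁.finite hE₂.finite hE₁.nonempty hE₂.nonempty
    hE₁.forall_lt (hE₁.eq_union ▸ hE₂.forall_lt) hle' hlt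

theorem exists_hasOsc (hG : IsReflecting C L ρ A B δ) (hC : IsCSequence C)
    (hL : IsLowerTrace C L) (hρ : IsMaximalWeight C ρ) (hA : A ⊆ Iio omega1)
    (hB : B ⊆ Iio omega1) (ha : a ∈ A) (hδa : δ < a) (hb : b ∈ B) (hδb : δ < b) :
    ∃ k, ∃ a' ∈ A, δ < a' ∧ ∃ b' ∈ B, δ < b' ∧ HasOsc (ρ · a') (ρ · b') (L δ b') k := by
  obtain ⟨a', ha', hδa', b', hb', hδb', E, hE, hlt⟩ :=
    hG.exists_traceExtends_lt hC hL hρ hA hB ha hδa hb hδb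
  refine ⟨_, a', ha'.1, hδa', b', hb', hδb', rfl, ?_⟩
  rw [hE.eq_union]
  exact endsAbove_union hE.forall_lt hE.nonempty hlt

theorem exists_forall_le_hasOsc_add (hG : IsReflecting C L ρ A B δ) (hC : IsCSequence C)
    (hL : IsLowerTrace C L) (hρ : IsMaximalWeight C ρ) (hA : A ⊆ Iio omega1)
    (hB : B ⊆ Iio omega1) (hAu : ∃ a ∈ A, δ < a) (hBu : ∃ b ∈ B, δ < b) (N : ℕ) :
    ∃ k, ∃ a ∈ A, δ < a ∧ ∃ b ∈ B, δ < b ∧ HasOsc (ρ · a) (ρ · b) (L δ b) (k + N) ∧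
      ∀ m ≤ N, ∃ b' ∈ B, δ < b' ∧ L δ b' ⊆ L δ b ∧
        HasOsc (ρ · a) (ρ · b') (L δ b') (k + m) := by
  obtain ⟨a₀, ha₀, hδa₀⟩ := hAu
  obtain ⟨b₀, hb₀, hδb₀⟩ := hBu
  induction N with
  | zero =>
    obtain ⟨k, a, ha, hδa, b, hb, hδb, hosc⟩ :=
      hG.exists_hasOsc hC hL hρ hA hB ha₀ hδa₀ hb₀ hδb₀
    refine ⟨k, a, ha, hδa, b, hb, hδb, hosc, fun m hm => ⟨b, hb, hδb, subset_rfl, ?_⟩⟩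
    rwa [Nat.le_zero.1 hm]
  | succ N ih =>
    obtain ⟨k, a, ha, hδa, b, hb, hδb, hosc, hall⟩ := ih
    obtain ⟨a', ha', hδa', b', hb', hδb', hsub, hosc'⟩ :=
      hG.exists_hasOsc_succ hC hL hρ hA hB ha hδa hb hδb hosc
    refine ⟨k, a', ha'.1, hδa', b', hb', hδb', hosc', fun m hm => ?_⟩
    rcases Nat.le_succ_iff.1 hm with hm | rfl
    · obtain ⟨c, hc, hδc, hcb, hcosc⟩ := hall m hm
      exact ⟨c, hc, hδc, hcb.trans hsub, hcosc.congr (ha'.2.mono hcb).symm (eqOn_refl _ _)⟩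
    · exact ⟨b', hb', hδb', subset_rfl, hosc'⟩

end IsReflecting

theorem HasOsc.ncard_oscSet_lowerTrace (hC : IsCSequence C) (hL : IsLowerTrace C L) {j : ℕ}
    (hosc : HasOsc (ρ · α) (ρ · β) (L δ β) j) (hξ : ξ ∈ C δ) (hξα : ξ < α) (hαδ : α < δ)
    (hδβ : δ ≤ β) (hβ : β < omega1) (hlt : ∀ x ∈ L δ β, x < ξ)
    (hcoh : ∀ η ∈ Ico ξ δ, ρ η β = ρ η δ) :
    (OscSet (ρ · α) (ρ · β) (L α β)).ncard =
      j + (OscSet (ρ · α) (ρ · δ) (L α δ)).ncard := by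
  have hα0 := hξα.pos
  have hδω := hδβ.trans_lt hβ
  have hLξ : L α δ ⊆ Ico ξ δ := fun y hy =>
    ⟨hL.le_of_mem hC hα0 hαδ hδω hξ hξα hy,
      lt_trans (hL.subset_Iio hC hα0 hαδ.le hδω hy) hαδ⟩
  have hlt' : ∀ x ∈ L δ β, ∀ y ∈ L α δ, x < y := fun x hx y hy => (hlt x hx).trans_le (hLξ hy).1
  rw [hL.eq_union hC hα0 hαδ.le hδβ hβ hlt',
    ncard_oscSet_union (hL.finite hC hαδ.pos hδβ hβ) (hL.finite hC hα0 hαδ.le hδω) hlt'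
      hosc.endsAbove, hosc.ncard_eq,
    oscSet_congr (eqOn_refl _ _) fun x hx => hcoh x (hLξ hx)]

theorem exists_forall_le_ncard_oscSet_eq_add (hC : IsCSequence C) (hL : IsLowerTrace C L)
    (hρ : IsMaximalWeight C ρ) (hA : A ⊆ Iio omega1) (hB : B ⊆ Iio omega1)
    (hAu : ¬ A.Countable) (hBu : ¬ B.Countable) (N : ℕ) :
    ∃ α ∈ A, ∃ k, ∀ m ≤ N, ∃ β ∈ B, α < β ∧
      (OscSet (ρ · α) (ρ · β) (L α β)).ncard = k + m := by
  obtain ⟨δ, hG⟩ := exists_isReflecting (L := L) (B := B) hC hρ hA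
  have exists_gt {S : Set Ordinal} (hS : S ⊆ Iio omega1) (hSu : ¬ S.Countable) :
      ∃ x ∈ S, δ < x :=
    let ⟨x, hxS, hδx, _⟩ :=
      exists_gt_of_frequently (frequently_mem_of_not_countable hS hSu) hG.lt_omega1
    ⟨x, hxS, hδx⟩
  obtain ⟨k, a, ha, hδa, b, hb, hδb, -, hall⟩ :=
    hG.exists_forall_le_hasOsc_add hC hL hρ hA hB (exists_gt hA hAu) (exists_gt hB hBu) N
  choose! β hβB hδβ hβb hosc using hall
  have hF := hL.finite hC hG.isSuccLimit.bot_lt hδb.le (hB hb)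
  have hFδ := hL.subset_Iio hC hG.isSuccLimit.bot_lt hδb.le (hB hb)
  have hD : (⋃ m ∈ Iic N, {ξ | ξ < δ ∧ ρ ξ (β m) ≠ ρ ξ δ}).Finite :=
    (finite_Iic N).biUnion fun m hm => hρ.finite_ofPred_ne hC (hδβ m hm).le (hB (hβB m hm))
  obtain ⟨ξ, hξC, hξδ, hξ⟩ := hC.exists_mem_forall_lt_of_finite hG.isSuccLimit hG.lt_omega1
    (hF.union hD) (union_subset hFδ (iUnion₂_subset fun m _ x hx => hx.1))
  obtain ⟨α, hα, hξα, hαδ⟩ := hG.exists_twin_mem_Ioo _ hF hFδ a ha hδa ξ hξδ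
  refine ⟨α, hα.1, k + (OscSet (ρ · α) (ρ · δ) (L α δ)).ncard, fun m hm =>
    ⟨β m, hβB m hm, hαδ.trans (hδβ m hm), ?_⟩⟩
  have hcoh : ∀ η ∈ Ico ξ δ, ρ η (β m) = ρ η δ := fun η hη => by
    by_contra hne
    exact (hξ η (Or.inr (mem_biUnion (mem_Iic.2 hm) ⟨hη.2, hne⟩))).not_ge hη.1
  have hoscα : HasOsc (ρ · α) (ρ · (β m)) (L δ (β m)) (k + m) :=
    (hosc m hm).congr (hα.2.mono (hβb m hm)).symm (eqOn_refl _ _)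
  rw [hoscα.ncard_oscSet_lowerTrace hC hL hξC hξα hαδ (hδβ m hm).le (hB (hβB m hm))
    (fun x hx => hξ x (Or.inl (hβb m hm hx))) hcoh]
  omega

/-- **Theorem (Moore).** For every pair of uncountable sets `A, B ⊆ ω₁` and every
`n < ω` there are `α ∈ A`, `β ∈ B` with `α < β` and `osc*(α,β) = n`; here
`osc(α,β) = |Osc(e_α, e_β; L(α,β))|` where `e_β(ξ) = ρ₁(ξ,β)`.  In particular
`osc*` witnesses `ω₁ ↛ [ω₁;ω₁]²_ω`. -/
theorem statement10
    -- a C-sequence: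
    (C : Ordinal → Set Ordinal)
    (hC : ∀ β : Ordinal, 0 < β → β < omega1 →
      C β ⊆ Set.Iio β ∧ (0 : Ordinal) ∈ C β ∧
      (∀ γ < β, ∃ x ∈ C β, γ ≤ x) ∧ (∀ γ < β, (C β ∩ Set.Iio γ).Finite))
    -- the associated lower trace:
    (L : Ordinal → Ordinal → Set Ordinal)
    (hL0 : ∀ α : Ordinal, L α α = ∅)
    (hLrec : ∀ α β : Ordinal, 0 < α → α < β → β < omega1 →
      L α β = insert (sSup (C β ∩ Set.Iio α))
        {ξ ∈ L α (sInf (C β \ Set.Iio α)) | sSup (C β ∩ Set.Iio α) < ξ})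
    -- the associated maximal weight (`e_β(α) = ρ₁(α,β) = ρ α β`):
    (ρ : Ordinal → Ordinal → ℕ)
    (hρ0 : ∀ α : Ordinal, ρ α α = 0)
    (hρrec : ∀ α β : Ordinal, α < β → β < omega1 →
      ρ α β = max (C β ∩ Set.Iio α).ncard (ρ α (sInf (C β \ Set.Iio α))))
    (A B : Set Ordinal) (hA : A ⊆ Set.Iio omega1) (hB : B ⊆ Set.Iio omega1)
    (hAu : ¬ A.Countable) (hBu : ¬ B.Countable) :
    ∀ n : ℕ, ∃ α ∈ A, ∃ β ∈ B, α < β ∧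
      starFn ((OscSet (fun η => ρ η α) (fun η => ρ η β) (L α β)).ncard) = n := by
  intro n
  have hC' : IsCSequence C :=
    ⟨fun β h0 hβ => (hC β h0 hβ).1, fun β h0 hβ => (hC β h0 hβ).2.1,
      fun β h0 hβ => (hC β h0 hβ).2.2.1, fun β h0 hβ => (hC β h0 hβ).2.2.2⟩
  have hL : IsLowerTrace C L := ⟨hL0, hLrec⟩
  have hρ : IsMaximalWeight C ρ := ⟨hρ0, hρrec⟩
  obtain ⟨N, hN⟩ := exists_forall_exists_starFn_add_eq n
  obtain ⟨α, hα, k, hosc⟩ :=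
    exists_forall_le_ncard_oscSet_eq_add hC' hL hρ hA hB hAu hBu N
  obtain ⟨m, hm, hstar⟩ := hN k
  obtain ⟨β, hβ, hαβ, hcard⟩ := hosc m hm
  exact ⟨α, hα, β, hβ, hαβ, hcard ▸ hstar⟩
end
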